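/- arXiv:1307.4201 — 11 statements merged into one kernel-verified Lean document; each statement's English description precedes it below -/
import Mathlib

section
/- Let V be an Archimedean ordered real vector space, let u ∈ V with 0 ≤ u, and let τ be a state operator on the interval effect algebra [0,u]. Then for every real number α ∈ [0,1] and every a ∈ [0,u], the element α•a lies in [0,u] and τ(α•a) = α•τ(a). -/
/-!
For `a ∈ [0,u]`, the error `e t = τ (t • a) - t • τ a` is additive on `[0,1]` and vanishes at `1`,
so it behaves like a homomorphism on the circle `ℝ / ℤ`: `n • e t = e (fract (n t))`. Positivity
of `τ` bounds `e` between `-τ a` and `τ a`, so all the multiples `n • e t` are bounded at once,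
which in an Archimedean space forces `e t = 0`.
-/

open Set

/-- The Archimedean property of a partially ordered group, in the sense of ordered vector spaces.
Mathlib's `Archimedean` is a different notion: it makes every positive element an order unit. -/
def IsArchimedeanOrder (V : Type*) [AddCommGroup V] [PartialOrder V] : Prop :=
  ∀ x y : V, (∀ n : ℕ, n • x ≤ y) → x ≤ 0

theorem IsArchimedeanOrder.eq_zero_of_forall_nsmul_mem_Icc {V : Type*} [AddCommGroup V]
    [PartialOrder V] [IsOrderedAddMonoid V] (arch : IsArchimedeanOrder V) {x y z : V}
    (h : ∀ n : ℕ, n • x ∈ Icc y z) : x = 0 := by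
  have hneg : -x ≤ 0 := arch (-x) (-y) fun n => by
    rw [smul_neg]
    exact neg_le_neg (h n).1
  exact le_antisymm (arch x z fun n => (h n).2) (neg_nonpos.mp hneg)

theorem smul_mem_Icc_zero {R V : Type*} [Semiring R] [PartialOrder R] [AddCommMonoid V]
    [PartialOrder V] [Module R V] [IsOrderedModule R V] {t : R} (ht : t ∈ Icc 0 1) {a u : V}
    (ha : a ∈ Icc 0 u) : t • a ∈ Icc 0 u :=
  ⟨smul_nonneg ht.1 ha.1, (smul_le_of_le_one_left ha.1 ht.2).trans ha.2⟩

/-- Additivity of `f` on the interval effect algebra `[0,u]`, whose partial sum is defined only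
when it stays in `[0,u]`. Values of `f` outside `[0,u]` are irrelevant. -/
def IntervalAdditive {V W : Type*} [AddCommGroup V] [PartialOrder V] [AddCommGroup W]
    (f : V → W) (u : V) : Prop :=
  ∀ a ∈ Icc 0 u, ∀ b ∈ Icc 0 u, a + b ∈ Icc 0 u → f (a + b) = f a + f b

namespace IntervalAdditive

section Group

variable {V W : Type*} [AddCommGroup V] [PartialOrder V] [AddCommGroup W] {f g : V → W} {u : V}

theorem map_zero (hf : IntervalAdditive f u) (hu : 0 ≤ u) : f 0 = 0 := by
  have hmem : (0 : V) ∈ Icc 0 u := left_mem_Icc.mpr hu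
  simpa only [add_zero, left_eq_add] using hf 0 hmem 0 hmem (by rwa [add_zero])

theorem sub (hf : IntervalAdditive f u) (hg : IntervalAdditive g u) :
    IntervalAdditive (fun a => f a - g a) u := fun a ha b hb hab => by
  simp only [hf a ha b hb hab, hg a ha b hb hab, add_sub_add_comm]

theorem map_add_map_sub [IsOrderedAddMonoid V] (hf : IntervalAdditive f u) {a b : V}
    (ha : 0 ≤ a) (hab : a ≤ b) (hb : b ≤ u) : f a + f (b - a) = f b := by
  have hsum : a + (b - a) = b := add_sub_cancel a b
  have hdiff : b - a ∈ Icc 0 u := ⟨sub_nonneg.mpr hab, (sub_le_self b ha).trans hb⟩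
  have hmem : a + (b - a) ∈ Icc 0 u := by rw [hsum]; exact ⟨ha.trans hab, hb⟩
  rw [← hf a ⟨ha, hab.trans hb⟩ (b - a) hdiff hmem, hsum]

theorem map_le_map [IsOrderedAddMonoid V] [PartialOrder W] [IsOrderedAddMonoid W]
    (hf : IntervalAdditive f u) (hnonneg : ∀ a ∈ Icc 0 u, 0 ≤ f a) {a b : V}
    (ha : 0 ≤ a) (hab : a ≤ b) (hb : b ≤ u) : f a ≤ f b := by
  rw [← hf.map_add_map_sub ha hab hb]
  exact le_add_of_nonneg_right
    (hnonneg _ ⟨sub_nonneg.mpr hab, (sub_le_self b ha).trans hb⟩)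

end Group

theorem comp_smul {R V W : Type*} [Ring R] [PartialOrder R] [AddCommGroup V]
    [PartialOrder V] [Module R V] [IsOrderedModule R V] [AddCommGroup W] {f : V → W} {u a : V}
    (hf : IntervalAdditive f u) (ha : a ∈ Icc 0 u) :
    IntervalAdditive (fun t : R => f (t • a)) 1 := fun s hs t ht hst => by
  have hsum : s • a + t • a ∈ Icc 0 u := add_smul s t a ▸ smul_mem_Icc_zero hst ha
  simpa only [add_smul] using hf _ (smul_mem_Icc_zero hs ha) _ (smul_mem_Icc_zero ht ha) hsum

section UnitInterval

variable {R W : Type*} [Ring R] [LinearOrder R] [IsStrictOrderedRing R] [FloorRing R]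
  [AddCommGroup W] {f : R → W}

theorem map_add_map_eq_map_fract (hf : IntervalAdditive f 1) (hone : f 1 = 0) {s t : R}
    (hs : s ∈ Ico 0 1) (ht : t ∈ Icc 0 1) : f s + f t = f (Int.fract (s + t)) := by
  have hnonneg : 0 ≤ s + t := add_nonneg hs.1 ht.1
  rcases lt_or_ge (s + t) 1 with hlt | hge
  · rw [Int.fract_eq_self.mpr ⟨hnonneg, hlt⟩,
      hf s ⟨hs.1, hs.2.le⟩ t ht ⟨hnonneg, hlt.le⟩]
  · have hfract : Int.fract (s + t) = s - (1 - t) := by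
      rw [← Int.fract_sub_one, Int.fract_eq_self.mpr
        ⟨sub_nonneg.mpr hge, sub_lt_iff_lt_add.mpr (add_lt_add_of_lt_of_le hs.2 ht.2)⟩]
      abel
    have hsplit : f (1 - t) + f (s - (1 - t)) = f s :=
      hf.map_add_map_sub (sub_nonneg.mpr ht.2) (sub_le_iff_le_add.mpr hge) hs.2.le
    have hcompl : f t + f (1 - t) = 0 := (hf.map_add_map_sub ht.1 ht.2 le_rfl).trans hone
    calc f s + f t = (f t + f (1 - t)) + f (s - (1 - t)) := by rw [← hsplit]; abel
      _ = f (Int.fract (s + t)) := by rw [hcompl, zero_add, hfract]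

theorem nsmul_map_eq_map_fract (hf : IntervalAdditive f 1) (hone : f 1 = 0) {t : R}
    (ht : t ∈ Icc 0 1) (n : ℕ) : n • f t = f (Int.fract (n • t)) := by
  induction n with
  | zero => rw [zero_smul, zero_smul, Int.fract_zero, hf.map_zero zero_le_one]
  | succ n ih =>
    have hfract : Int.fract (Int.fract (n • t) + t) = Int.fract ((n + 1) • t) := by
      rw [Int.fract_eq_fract]
      exact ⟨-⌊n • t⌋, by rw [succ_nsmul, Int.cast_neg, ← Int.self_sub_floor]; abel⟩
    rw [succ_nsmul, ih, hf.map_add_map_eq_map_fract hone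
      ⟨Int.fract_nonneg _, Int.fract_lt_one _⟩ ht, hfract]

variable [PartialOrder W] [IsOrderedAddMonoid W]

theorem eq_zero_of_map_one_eq_zero (arch : IsArchimedeanOrder W) (hf : IntervalAdditive f 1)
    (hone : f 1 = 0) {y z : W} (hbdd : ∀ t ∈ Icc 0 1, f t ∈ Icc y z) {t : R}
    (ht : t ∈ Icc 0 1) : f t = 0 :=
  arch.eq_zero_of_forall_nsmul_mem_Icc fun n => by
    rw [hf.nsmul_map_eq_map_fract hone ht]
    exact hbdd _ ⟨Int.fract_nonneg _, (Int.fract_lt_one _).le⟩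

theorem eq_smul_map_one [Module R W] [IsOrderedModule R W] (arch : IsArchimedeanOrder W)
    (hf : IntervalAdditive f 1) (hnonneg : ∀ t ∈ Icc 0 1, 0 ≤ f t) {t : R}
    (ht : t ∈ Icc 0 1) : f t = t • f 1 := by
  have hone : 0 ≤ f 1 := hnonneg 1 (right_mem_Icc.mpr zero_le_one)
  have herror : IntervalAdditive (fun s => f s - s • f 1) 1 :=
    hf.sub fun r _ s _ _ => add_smul r s (f 1)
  have hbdd : ∀ s ∈ Icc (0 : R) 1, f s - s • f 1 ∈ Icc (-f 1) (f 1) := fun s hs => by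
    have hsmul : s • f 1 ∈ Icc 0 (f 1) := smul_mem_Icc_zero hs (right_mem_Icc.mpr hone)
    constructor
    · calc -f 1 ≤ -(s • f 1) := neg_le_neg hsmul.2
        _ ≤ f s - s • f 1 := neg_le_sub_iff_le_add.mpr (le_add_of_nonneg_left (hnonneg s hs))
    · calc f s - s • f 1 ≤ f s := sub_le_self _ hsmul.1
        _ ≤ f 1 := hf.map_le_map hnonneg hs.1 hs.2 le_rfl
  exact sub_eq_zero.mp
    (herror.eq_zero_of_map_one_eq_zero arch (by rw [one_smul, sub_self]) hbdd ht)

end UnitInterval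

end IntervalAdditive

theorem stateOperator_smul_general {R V W : Type*} [Ring R] [LinearOrder R]
    [IsStrictOrderedRing R] [FloorRing R]
    [AddCommGroup V] [PartialOrder V] [Module R V] [IsOrderedModule R V]
    [AddCommGroup W] [PartialOrder W] [IsOrderedAddMonoid W] [Module R W] [IsOrderedModule R W]
    (arch : IsArchimedeanOrder W) {u : V} {τ : V → W} (hadd : IntervalAdditive τ u)
    (hnonneg : ∀ a ∈ Icc 0 u, 0 ≤ τ a) :
    ∀ α ∈ Icc (0 : R) 1, ∀ a ∈ Icc 0 u, α • a ∈ Icc 0 u ∧ τ (α • a) = α • τ a := by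
  intro α hα a ha
  have hhom : τ (α • a) = α • τ ((1 : R) • a) :=
    (hadd.comp_smul ha).eq_smul_map_one arch
      (fun t ht => hnonneg (t • a) (smul_mem_Icc_zero ht ha)) hα
  exact ⟨smul_mem_Icc_zero hα ha, by rwa [one_smul] at hhom⟩

/-- Let `V` be an Archimedean ordered real vector space, `u ∈ V` with `0 ≤ u`,
and `τ` a state operator on the interval effect algebra `[0,u]`. Then for every `α ∈ [0,1]`
and every `a ∈ [0,u]`, the element `α • a` lies in `[0,u]` and `τ (α • a) = α • τ a`. -/
theorem stateOperator_smul
    (V : Type*) [AddCommGroup V] [PartialOrder V]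
    [CovariantClass V V (· + ·) (· ≤ ·)] [Module ℝ V]
    (smul_nonneg' : ∀ (c : ℝ) (x : V), 0 ≤ c → 0 ≤ x → 0 ≤ c • x)
    (arch : ∀ x y : V, (∀ n : ℕ, n • x ≤ y) → x ≤ 0)
    (u : V) (hu : 0 ≤ u)
    (τ : V → V)
    (hmaps : ∀ a ∈ Set.Icc (0 : V) u, τ a ∈ Set.Icc (0 : V) u)
    (hunit : τ u = u)
    (hadd : ∀ a ∈ Set.Icc (0 : V) u, ∀ b ∈ Set.Icc (0 : V) u,
      a + b ∈ Set.Icc (0 : V) u → τ (a + b) = τ a + τ b)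
    (hidem : ∀ a ∈ Set.Icc (0 : V) u, τ (τ a) = τ a) :
    ∀ α ∈ Set.Icc (0 : ℝ) 1, ∀ a ∈ Set.Icc (0 : V) u,
      α • a ∈ Set.Icc (0 : V) u ∧ τ (α • a) = α • τ a := by
  have : IsOrderedAddMonoid V := { add_le_add_left := fun _ _ h c => add_le_add_left h c }
  have : IsOrderedModule ℝ V := .of_smul_nonneg fun c hc x hx => smul_nonneg' c x hc hx
  exact stateOperator_smul_general arch hadd fun a ha => (hmaps a ha).1
end

section
/- Let V be an Archimedean ordered real vector space and let u be an order unit of V, i.e., 0 ≤ u and for every x ∈ V there exists a natural number n with x ≤ n•u. Let τ be a state operator on the interval effect algebra [0,u]. Then there exists an ℝ-linear map p : V → V such that p is positive (0 ≤ x implies 0 ≤ p(x)), idempotent (p(p(x)) = p(x) for all x ∈ V), and p(a) = τ(a) for every a ∈ [0,u]. -/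
/-!
A vector `x ≥ 0` with `x ≤ n • u` can be rescaled into `[0, u]`, and additivity of `τ` on `[0, u]`
makes `n • τ (n⁻¹ • x)` independent of `n`; this extends `τ` additively to the positive cone. The
order unit makes the cone generating, so the space is the localization (Grothendieck group) of the
cone and the extension continues to an additive map `p` on the whole space, which is monotone. The
Archimedean property turns the comparison of `n * c` with its integer roundings into homogeneity of
`p`. Finally `[0, u]` spans the space and `p ∘ p` agrees with `p` there.
-/

open Set

section Definitions

variable {V W : Type*} [AddCommMonoid V] [Preorder V]

/-- An order unit: a nonnegative element whose natural multiples are cofinal. -/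
structure IsOrderUnit (u : V) : Prop where
  nonneg : 0 ≤ u
  exists_le_nsmul (x : V) : ∃ n : ℕ, x ≤ n • u

variable (V) in
/-- The Archimedean property of ordered vector spaces: elements whose natural multiples have a
common upper bound are nonpositive. Mathlib's `Archimedean` is much more restrictive for partial
orders, since it makes every positive element an order unit. -/
def IsOrderArchimedean : Prop :=
  ∀ x y : V, (∀ n : ℕ, n • x ≤ y) → x ≤ 0

/-- Additivity of a map on the interval effect algebra `[0, u]`, where `a + b` is defined only if
it stays below `u`. The map is total, with irrelevant values outside the interval. -/
def IsIntervalAdditive [Add W] (u : V) (τ : V → W) : Prop :=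
  ∀ a ∈ Icc 0 u, ∀ b ∈ Icc 0 u, a + b ∈ Icc 0 u → τ (a + b) = τ a + τ b

end Definitions

section GeneratingCone

variable {V W : Type*} [AddCommGroup V] [AddCommGroup W]

lemma exists_addMonoidHom_extending {P : AddSubmonoid V}
    (hP : ∀ x : V, ∃ a ∈ P, ∃ b ∈ P, a - b = x) (f : P →+ W) :
    ∃ p : V →+ W, ∀ a : P, p a = f a := by
  let ι : (⊤ : AddSubmonoid P).LocalizationMap V :=
    { P.subtype with
      isLocalizationMap :=
        { map_addUnits := fun a => AddGroup.isAddUnit (a : V)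
          surj := fun x => by
            obtain ⟨a, ha, b, hb, rfl⟩ := hP x
            exact ⟨(⟨a, ha⟩, ⟨⟨b, hb⟩, trivial⟩), sub_add_cancel a b⟩
          exists_of_eq := fun h => ⟨0, congrArg _ (Subtype.ext h)⟩ } }
  have hf : ∀ a : (⊤ : AddSubmonoid P), IsAddUnit (f a) := fun a => AddGroup.isAddUnit _
  exact ⟨ι.lift hf, ι.lift_eq hf⟩

lemma exists_nonneg_sub_nonneg_eq [PartialOrder V] [IsOrderedAddMonoid V] [IsDirectedOrder V]
    (x : V) : ∃ a : V, 0 ≤ a ∧ ∃ b : V, 0 ≤ b ∧ a - b = x := by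
  obtain ⟨a, ha, hxa⟩ := exists_ge_ge 0 x
  exact ⟨a, ha, a - x, sub_nonneg.2 hxa, sub_sub_cancel a x⟩

end GeneratingCone

section Homogeneity

variable {𝕜 V W : Type*} [Ring 𝕜] [LinearOrder 𝕜] [IsStrictOrderedRing 𝕜] [Archimedean 𝕜]
  [AddCommGroup V] [PartialOrder V] [IsOrderedAddMonoid V] [Module 𝕜 V] [IsOrderedModule 𝕜 V]
  [AddCommGroup W] [PartialOrder W] [IsOrderedAddMonoid W] [Module 𝕜 W] [IsOrderedModule 𝕜 W]

lemma map_smul_le_smul_map_of_monotone (arch : IsOrderArchimedean W) {p : V →+ W}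
    (hp : Monotone p) (c : 𝕜) {x : V} (hx : 0 ≤ x) : p (c • x) ≤ c • p x := by
  let _ : FloorRing 𝕜 := Archimedean.floorRing 𝕜
  have hpx : 0 ≤ p x := by simpa only [map_zero] using hp hx
  have nsmul_le (n : ℕ) : n • p (c • x) ≤ n • c • p x + p x :=
    calc n • p (c • x) = p ((n * c) • x) := by
          rw [mul_smul, Nat.cast_smul_eq_nsmul, map_nsmul]
      _ ≤ p ((⌈n * c⌉ : 𝕜) • x) := hp (smul_le_smul_of_nonneg_right (Int.le_ceil _) hx)
      _ = (⌈n * c⌉ : 𝕜) • p x := by simp only [Int.cast_smul_eq_zsmul, map_zsmul]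
      _ ≤ (n * c + 1) • p x :=
          smul_le_smul_of_nonneg_right (Int.ceil_lt_add_one _).le hpx
      _ = n • c • p x + p x := by
          rw [add_smul, one_smul, mul_smul, Nat.cast_smul_eq_nsmul]
  refine sub_nonpos.1 (arch _ (p x) fun n => ?_)
  rw [nsmul_sub]
  exact sub_le_iff_le_add'.2 (nsmul_le n)

lemma map_smul_of_monotone [IsDirectedOrder V] (arch : IsOrderArchimedean W) {p : V →+ W}
    (hp : Monotone p) (c : 𝕜) (x : V) : p (c • x) = c • p x := by
  have map_smul_of_nonneg {a : V} (ha : 0 ≤ a) : p (c • a) = c • p a := by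
    refine (map_smul_le_smul_map_of_monotone arch hp c ha).antisymm ?_
    simpa only [neg_smul, map_neg, neg_le_neg_iff] using
      map_smul_le_smul_map_of_monotone arch hp (-c) ha
  obtain ⟨a, ha, b, hb, rfl⟩ := exists_nonneg_sub_nonneg_eq x
  rw [smul_sub, map_sub, map_sub, smul_sub, map_smul_of_nonneg ha, map_smul_of_nonneg hb]

end Homogeneity

lemma inv_natCast_smul_mem_Icc {𝕜 V : Type*} [Field 𝕜] [LinearOrder 𝕜] [IsStrictOrderedRing 𝕜]
    [AddCommGroup V] [PartialOrder V] [Module 𝕜 V] [PosSMulMono 𝕜 V]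
    {n : ℕ} (hn : 0 < n) {u x : V} (hx : 0 ≤ x) (hxn : x ≤ n • u) :
    (n : 𝕜)⁻¹ • x ∈ Icc 0 u := by
  have hn' : (0 : 𝕜) < n := Nat.cast_pos.2 hn
  refine ⟨smul_nonneg (inv_nonneg.2 hn'.le) hx, ?_⟩
  rwa [inv_smul_le_iff_of_pos hn', Nat.cast_smul_eq_nsmul]

namespace IsOrderUnit

section Monoid

variable {V : Type*} [AddCommMonoid V] [Preorder V] [IsOrderedAddMonoid V] {u : V}

lemma exists_pos_le_nsmul (hu : IsOrderUnit u) (x : V) : ∃ n : ℕ, 0 < n ∧ x ≤ n • u := by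
  obtain ⟨n, hn⟩ := hu.exists_le_nsmul x
  exact ⟨n + 1, n.succ_pos, hn.trans (nsmul_le_nsmul_left hu.nonneg n.le_succ)⟩

lemma isDirectedOrder (hu : IsOrderUnit u) : IsDirectedOrder V where
  directed x y := by
    obtain ⟨m, hm⟩ := hu.exists_le_nsmul x
    obtain ⟨n, hn⟩ := hu.exists_le_nsmul y
    exact ⟨max m n • u, hm.trans (nsmul_le_nsmul_left hu.nonneg (le_max_left m n)),
      hn.trans (nsmul_le_nsmul_left hu.nonneg (le_max_right m n))⟩

end Monoid

variable (𝕜 : Type*) {V : Type*} [Field 𝕜] [LinearOrder 𝕜] [IsStrictOrderedRing 𝕜]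
  [AddCommGroup V] [PartialOrder V] [IsOrderedAddMonoid V] [Module 𝕜 V] [PosSMulMono 𝕜 V] {u : V}

include 𝕜 in
lemma exists_nsmul_eq_of_nonneg (hu : IsOrderUnit u) {x : V} (hx : 0 ≤ x) :
    ∃ n : ℕ, ∃ a ∈ Icc 0 u, n • a = x := by
  obtain ⟨n, hn, hxn⟩ := hu.exists_pos_le_nsmul x
  refine ⟨n, (n : 𝕜)⁻¹ • x, inv_natCast_smul_mem_Icc hn hx hxn, ?_⟩
  rw [← Nat.cast_smul_eq_nsmul 𝕜, smul_inv_smul₀ (Nat.cast_ne_zero.2 hn.ne')]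

lemma span_Icc_eq_top (hu : IsOrderUnit u) : Submodule.span 𝕜 (Icc 0 u) = ⊤ := by
  have mem_span_of_nonneg {x : V} (hx : 0 ≤ x) : x ∈ Submodule.span 𝕜 (Icc 0 u) := by
    obtain ⟨n, a, ha, rfl⟩ := hu.exists_nsmul_eq_of_nonneg 𝕜 hx
    exact nsmul_mem (Submodule.subset_span ha) n
  have := hu.isDirectedOrder
  refine Submodule.eq_top_iff'.2 fun x => ?_
  obtain ⟨a, ha, b, hb, rfl⟩ := exists_nonneg_sub_nonneg_eq x
  exact sub_mem (mem_span_of_nonneg ha) (mem_span_of_nonneg hb)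

end IsOrderUnit

namespace IsIntervalAdditive

section Monoid

variable {V W : Type*} [AddCommMonoid V] [Preorder V] [IsOrderedAddMonoid V] {u : V} {τ : V → W}

protected lemma map_add [Add W] (hτ : IsIntervalAdditive u τ) {a b : V} (ha : 0 ≤ a)
    (hb : 0 ≤ b) (hab : a + b ≤ u) : τ (a + b) = τ a + τ b :=
  hτ a ⟨ha, (le_add_of_nonneg_right hb).trans hab⟩ b ⟨hb, (le_add_of_nonneg_left ha).trans hab⟩
    ⟨add_nonneg ha hb, hab⟩

protected lemma map_nsmul [AddCommGroup W] (hτ : IsIntervalAdditive u τ) (hu : 0 ≤ u) {a : V}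
    (ha : 0 ≤ a) {n : ℕ} (hn : n • a ≤ u) : τ (n • a) = n • τ a := by
  induction n with
  | zero =>
    have hτ0 : τ 0 = τ 0 + τ 0 := by
      simpa only [add_zero] using hτ.map_add le_rfl le_rfl ((add_zero (0 : V)).trans_le hu)
    simpa only [zero_nsmul] using left_eq_add.1 hτ0
  | succ n ih =>
    rw [succ_nsmul] at hn ⊢
    rw [hτ.map_add (nsmul_nonneg ha n) ha hn, ih ((le_add_of_nonneg_right ha).trans hn),
      succ_nsmul]

end Monoid

variable {V W : Type*} [AddCommGroup V] [PartialOrder V] [IsOrderedAddMonoid V] [AddCommGroup W]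
  {u : V} {τ : V → W}

section Rescaling

variable {𝕜 : Type*} [Field 𝕜] [LinearOrder 𝕜] [IsStrictOrderedRing 𝕜] [Module 𝕜 V]
  [PosSMulMono 𝕜 V]

lemma nsmul_map_inv_smul_eq_mul (hτ : IsIntervalAdditive u τ) (hu : 0 ≤ u) {m n : ℕ}
    (hm : 0 < m) (hn : 0 < n) {x : V} (hx : 0 ≤ x) (hxn : x ≤ n • u) :
    n • τ ((n : 𝕜)⁻¹ • x) = (n * m) • τ (((n * m : ℕ) : 𝕜)⁻¹ • x) := by
  have hm' : (m : 𝕜) ≠ 0 := Nat.cast_ne_zero.2 hm.ne'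
  have inv_smul_eq : (n : 𝕜)⁻¹ • x = m • ((n * m : ℕ) : 𝕜)⁻¹ • x := by
    rw [← Nat.cast_smul_eq_nsmul 𝕜, smul_smul, Nat.cast_mul, mul_comm (n : 𝕜), mul_inv,
      mul_inv_cancel_left₀ hm']
  have inv_smul_le : m • ((n * m : ℕ) : 𝕜)⁻¹ • x ≤ u :=
    inv_smul_eq ▸ (inv_natCast_smul_mem_Icc hn hx hxn).2
  rw [inv_smul_eq, hτ.map_nsmul hu (smul_nonneg (by positivity) hx) inv_smul_le, mul_nsmul']

lemma nsmul_map_inv_smul_eq (hτ : IsIntervalAdditive u τ) (hu : 0 ≤ u) {m n : ℕ}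
    (hm : 0 < m) (hn : 0 < n) {x : V} (hx : 0 ≤ x) (hxm : x ≤ m • u) (hxn : x ≤ n • u) :
    m • τ ((m : 𝕜)⁻¹ • x) = n • τ ((n : 𝕜)⁻¹ • x) := by
  rw [hτ.nsmul_map_inv_smul_eq_mul hu hn hm hx hxm, hτ.nsmul_map_inv_smul_eq_mul hu hm hn hx hxn,
    mul_comm]

variable (𝕜)

include 𝕜 in
lemma exists_addMonoidHom_nonneg (hτ : IsIntervalAdditive u τ) (hu : IsOrderUnit u) :
    ∃ q : AddSubmonoid.nonneg V →+ W,
      ∀ a : AddSubmonoid.nonneg V, (a : V) ≤ u → q a = τ a := by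
  choose N hN hxN using hu.exists_pos_le_nsmul
  let q (x : V) : W := N x • τ ((N x : 𝕜)⁻¹ • x)
  have q_eq {x : V} (hx : 0 ≤ x) {n : ℕ} (hn : 0 < n) (hxn : x ≤ n • u) :
      q x = n • τ ((n : 𝕜)⁻¹ • x) :=
    hτ.nsmul_map_inv_smul_eq hu.nonneg (hN x) hn hx (hxN x) hxn
  have q_add {x y : V} (hx : 0 ≤ x) (hy : 0 ≤ y) : q (x + y) = q x + q y := by
    have hxy := add_nonneg hx hy
    obtain ⟨n, hn, hxyn⟩ := hu.exists_pos_le_nsmul (x + y)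
    have hxn : x ≤ n • u := (le_add_of_nonneg_right hy).trans hxyn
    have hyn : y ≤ n • u := (le_add_of_nonneg_left hx).trans hxyn
    have hmem := inv_natCast_smul_mem_Icc (𝕜 := 𝕜) hn hxy hxyn
    rw [smul_add] at hmem
    rw [q_eq hxy hn hxyn, q_eq hx hn hxn, q_eq hy hn hyn, smul_add,
      hτ.map_add (inv_natCast_smul_mem_Icc hn hx hxn).1 (inv_natCast_smul_mem_Icc hn hy hyn).1
        hmem.2, nsmul_add]
  refine ⟨AddMonoidHom.mk' (fun x => q x) fun x y => q_add x.2 y.2, fun a ha => ?_⟩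
  calc q a = 1 • τ (((1 : ℕ) : 𝕜)⁻¹ • (a : V)) := q_eq a.2 one_pos (by rwa [one_nsmul])
    _ = τ a := by rw [one_nsmul, Nat.cast_one, inv_one, one_smul]

include 𝕜 in
lemma exists_addMonoidHom (hτ : IsIntervalAdditive u τ) (hu : IsOrderUnit u) :
    ∃ p : V →+ W, EqOn p τ (Icc 0 u) := by
  have := hu.isDirectedOrder
  obtain ⟨q, hqτ⟩ := hτ.exists_addMonoidHom_nonneg 𝕜 hu
  obtain ⟨p, hpq⟩ := exists_addMonoidHom_extending exists_nonneg_sub_nonneg_eq q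
  exact ⟨p, fun a ha => (hpq ⟨a, ha.1⟩).trans (hqτ ⟨a, ha.1⟩ ha.2)⟩

end Rescaling

theorem exists_monotone_linearMap (𝕜 : Type*) [Field 𝕜] [LinearOrder 𝕜] [IsStrictOrderedRing 𝕜]
    [Archimedean 𝕜] [Module 𝕜 V] [IsOrderedModule 𝕜 V]
    [PartialOrder W] [IsOrderedAddMonoid W] [Module 𝕜 W] [IsOrderedModule 𝕜 W]
    (arch : IsOrderArchimedean W) (hτ : IsIntervalAdditive u τ) (hu : IsOrderUnit u)
    (hnonneg : ∀ a ∈ Icc 0 u, 0 ≤ τ a) :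
    ∃ p : V →ₗ[𝕜] W, Monotone p ∧ EqOn p τ (Icc 0 u) := by
  obtain ⟨p, hpτ⟩ := hτ.exists_addMonoidHom 𝕜 hu
  have hmono : Monotone p := by
    refine (monotone_iff_map_nonneg p).2 fun x hx => ?_
    obtain ⟨n, a, ha, rfl⟩ := hu.exists_nsmul_eq_of_nonneg 𝕜 hx
    rw [map_nsmul, hpτ ha]
    exact nsmul_nonneg (hnonneg a ha) n
  have := hu.isDirectedOrder
  exact ⟨{ p with map_smul' := map_smul_of_monotone arch hmono }, hmono, hpτ⟩

end IsIntervalAdditive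

theorem stateOperator_extends_to_linear_general
    {𝕜 V : Type*} [Field 𝕜] [LinearOrder 𝕜] [IsStrictOrderedRing 𝕜] [Archimedean 𝕜]
    [AddCommGroup V] [PartialOrder V] [IsOrderedAddMonoid V] [Module 𝕜 V] [IsOrderedModule 𝕜 V]
    (arch : IsOrderArchimedean V) {u : V} (hu : IsOrderUnit u) {τ : V → V}
    (hmaps : MapsTo τ (Icc 0 u) (Icc 0 u)) (hadd : IsIntervalAdditive u τ)
    (hidem : ∀ a ∈ Icc 0 u, τ (τ a) = τ a) :
    ∃ p : V →ₗ[𝕜] V,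
      (∀ x : V, 0 ≤ x → 0 ≤ p x) ∧ (∀ x : V, p (p x) = p x) ∧ ∀ a ∈ Icc 0 u, p a = τ a := by
  obtain ⟨p, hmono, hpτ⟩ := hadd.exists_monotone_linearMap 𝕜 arch hu fun a ha => (hmaps ha).1
  have comp_self : p ∘ₗ p = p := LinearMap.ext_on (hu.span_Icc_eq_top 𝕜) fun a ha => by
    rw [LinearMap.comp_apply, hpτ ha, hpτ (hmaps ha), hidem a ha]
  exact ⟨p, (monotone_iff_map_nonneg p).1 hmono, LinearMap.congr_fun comp_self, fun _ => @hpτ _⟩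

/-- A state operator on the interval effect algebra `[0,u]` of an Archimedean
ordered real vector space with order unit `u` extends to a positive idempotent `ℝ`-linear
map `p : V → V`. -/
theorem stateOperator_extends_to_linear
    (V : Type*) [AddCommGroup V] [PartialOrder V]
    [CovariantClass V V (· + ·) (· ≤ ·)] [Module ℝ V]
    (smul_nonneg' : ∀ (c : ℝ) (x : V), 0 ≤ c → 0 ≤ x → 0 ≤ c • x)
    (arch : ∀ x y : V, (∀ n : ℕ, n • x ≤ y) → x ≤ 0)
    (u : V) (hu : 0 ≤ u)
    (hunit_order : ∀ x : V, ∃ n : ℕ, x ≤ n • u)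
    (τ : V → V)
    (hmaps : ∀ a ∈ Set.Icc (0 : V) u, τ a ∈ Set.Icc (0 : V) u)
    (hunit : τ u = u)
    (hadd : ∀ a ∈ Set.Icc (0 : V) u, ∀ b ∈ Set.Icc (0 : V) u,
      a + b ∈ Set.Icc (0 : V) u → τ (a + b) = τ a + τ b)
    (hidem : ∀ a ∈ Set.Icc (0 : V) u, τ (τ a) = τ a) :
    ∃ p : V →ₗ[ℝ] V,
      (∀ x : V, 0 ≤ x → 0 ≤ p x) ∧
      (∀ x : V, p (p x) = p x) ∧
      (∀ a ∈ Set.Icc (0 : V) u, p a = τ a) := by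
  have : IsOrderedAddMonoid V := { add_le_add_left := fun _ _ h c => add_le_add_left h c }
  have : IsOrderedModule ℝ V := .of_smul_nonneg fun c hc x => smul_nonneg' c x hc
  exact stateOperator_extends_to_linear_general arch ⟨hu, hunit_order⟩ hmaps hadd hidem
end

section
/- Let V be an Archimedean ordered real vector space, let u be an order unit of V (0 ≤ u and for every x ∈ V there exists a natural number n with x ≤ n•u), and let τ be a state operator on [0,u] that is strong, meaning: for all a, b ∈ [0,u], if c ∈ V is the greatest lower bound in V of the set {τ(a), τ(b)}, then c ∈ [0,u] and τ(c) = c. Let p : V → V be a positive idempotent ℝ-linear map extending τ (p(a) = τ(a) for a ∈ [0,u]). Then for all x, y ∈ V with 0 ≤ x and 0 ≤ y, if z ∈ V is the greatest lower bound in V of the set {p(x), p(y)}, then p(z) = z. -/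
/-!
Multiplication by a positive scalar is an order automorphism of the ordered vector space commuting
with `p`, so `p` inherits strongness on `[0, r • u]` from strongness on `[0, u]`. As `u` is an order
unit, any two positive elements lie in a common interval `[0, r • u]`.
-/

/-- A self-map `f` is strong on `s` if every infimum in the ambient order of a pair of values of `f`
on `s` lies in `s` and is a fixed point of `f`. For a state operator on the effect algebra
`s = [0, u]` this is the usual notion; the ambient set is kept as a parameter so that it can be
enlarged. -/
def IsStrongOn {α : Type*} [Preorder α] (f : α → α) (s : Set α) : Prop :=
  ∀ a ∈ s, ∀ b ∈ s, ∀ c, IsGLB {f a, f b} c → c ∈ s ∧ f c = c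

namespace IsStrongOn

section Preorder

variable {α : Type*} [Preorder α] {f g : α → α} {s : Set α}

theorem congr (hf : IsStrongOn f s) (hgf : Set.EqOn g f s) : IsStrongOn g s := by
  intro a ha b hb c hc
  rw [hgf ha, hgf hb] at hc
  obtain ⟨hcs, hfix⟩ := hf a ha b hb c hc
  exact ⟨hcs, (hgf hcs).trans hfix⟩

theorem image_orderIso (hf : IsStrongOn f s) (e : α ≃o α) (hfe : Function.Commute f e) :
    IsStrongOn f (e '' s) := by
  rintro _ ⟨a, ha, rfl⟩ _ ⟨b, hb, rfl⟩ c hc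
  rw [hfe a, hfe b, ← Set.image_pair, e.isGLB_image] at hc
  obtain ⟨hmem, hfix⟩ := hf a ha b hb (e.symm c) hc
  refine ⟨⟨e.symm c, hmem, e.apply_symm_apply c⟩, ?_⟩
  calc
    f c = f (e (e.symm c)) := by rw [e.apply_symm_apply]
    _ = e (f (e.symm c)) := hfe (e.symm c)
    _ = c := by rw [hfix, e.apply_symm_apply]

end Preorder

theorem Icc_smul {𝕜 E : Type*} [GroupWithZero 𝕜] [Preorder 𝕜] [Preorder E]
    [MulAction 𝕜 E] [PosSMulMono 𝕜 E] [PosSMulReflectLE 𝕜 E] {f : E → E} {a b : E}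
    (hf : IsStrongOn f (Set.Icc a b)) {r : 𝕜} (hr : 0 < r) (hfr : ∀ x, f (r • x) = r • f x) :
    IsStrongOn f (Set.Icc (r • a) (r • b)) :=
  (OrderIso.smulRight hr).image_Icc a b ▸ hf.image_orderIso (OrderIso.smulRight hr) hfr

end IsStrongOn

theorem strong_stateOperator_extension_preserves_inf_general {𝕜 E : Type*} [Semifield 𝕜]
    [LinearOrder 𝕜] [IsStrictOrderedRing 𝕜] [AddCommGroup E] [PartialOrder E] [Module 𝕜 E]
    [IsOrderedModule 𝕜 E] {u : E} (hu : 0 ≤ u) {τ p : E → E} (hτ : IsStrongOn τ (Set.Icc 0 u))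
    (hp : ∀ r : 𝕜, 0 < r → ∀ x, p (r • x) = r • p x) (hext : Set.EqOn p τ (Set.Icc 0 u)) :
    IsStrongOn p {x | 0 ≤ x ∧ ∃ r : 𝕜, x ≤ r • u} := by
  rintro x ⟨hx, r, hxr⟩ y ⟨hy, s, hys⟩ z hz
  obtain ⟨t, ht, hrt, hst⟩ : ∃ t : 𝕜, 0 < t ∧ r ≤ t ∧ s ≤ t :=
    ⟨max 1 (max r s), by simp, by simp, by simp⟩
  have hstrong : IsStrongOn p (Set.Icc 0 (t • u)) := by
    simpa only [smul_zero] using (hτ.congr hext).Icc_smul ht (hp t ht)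
  have hx_mem : x ∈ Set.Icc 0 (t • u) := ⟨hx, hxr.trans (smul_le_smul_of_nonneg_right hrt hu)⟩
  have hy_mem : y ∈ Set.Icc 0 (t • u) := ⟨hy, hys.trans (smul_le_smul_of_nonneg_right hst hu)⟩
  obtain ⟨⟨hz_nonneg, hz_le⟩, hfix⟩ := hstrong x hx_mem y hy_mem z hz
  exact ⟨⟨hz_nonneg, t, hz_le⟩, hfix⟩

/-- If `τ` is a strong state operator on `[0,u]` and `p` is a positive idempotent
linear extension of `τ`, then `p` preserves existing infima of pairs of images of positive
elements: whenever `z` is the greatest lower bound in `V` of `{p x, p y}` with `x, y ≥ 0`,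
we have `p z = z`. -/
theorem strong_stateOperator_extension_preserves_inf
    (V : Type*) [AddCommGroup V] [PartialOrder V]
    [CovariantClass V V (· + ·) (· ≤ ·)] [Module ℝ V]
    (smul_nonneg' : ∀ (c : ℝ) (x : V), 0 ≤ c → 0 ≤ x → 0 ≤ c • x)
    (arch : ∀ x y : V, (∀ n : ℕ, n • x ≤ y) → x ≤ 0)
    (u : V) (hu : 0 ≤ u)
    (hunit_order : ∀ x : V, ∃ n : ℕ, x ≤ n • u)
    (τ : V → V)
    (hmaps : ∀ a ∈ Set.Icc (0 : V) u, τ a ∈ Set.Icc (0 : V) u)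
    (hunit : τ u = u)
    (hadd : ∀ a ∈ Set.Icc (0 : V) u, ∀ b ∈ Set.Icc (0 : V) u,
      a + b ∈ Set.Icc (0 : V) u → τ (a + b) = τ a + τ b)
    (hidem : ∀ a ∈ Set.Icc (0 : V) u, τ (τ a) = τ a)
    (hstrong : ∀ a ∈ Set.Icc (0 : V) u, ∀ b ∈ Set.Icc (0 : V) u, ∀ c : V,
      IsGLB {τ a, τ b} c → c ∈ Set.Icc (0 : V) u ∧ τ c = c)
    (p : V →ₗ[ℝ] V)
    (hpos : ∀ x : V, 0 ≤ x → 0 ≤ p x)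
    (hpidem : ∀ x : V, p (p x) = p x)
    (hext : ∀ a ∈ Set.Icc (0 : V) u, p a = τ a) :
    ∀ x y : V, 0 ≤ x → 0 ≤ y → ∀ z : V, IsGLB {p x, p y} z → p z = z := by
  have : IsOrderedAddMonoid V := { add_le_add_left := fun _ _ h c => by gcongr }
  have : IsOrderedModule ℝ V := .of_smul_nonneg fun c hc x hx => smul_nonneg' c x hc hx
  have hbdd (x : V) : ∃ r : ℝ, x ≤ r • u := by
    obtain ⟨n, hn⟩ := hunit_order x
    exact ⟨n, by rwa [Nat.cast_smul_eq_nsmul]⟩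
  intro x y hx hy z hz
  exact (strong_stateOperator_extension_preserves_inf_general hu hstrong
    (fun r _ => map_smul p r) hext x ⟨hx, hbdd x⟩ y ⟨hy, hbdd y⟩ z hz).2
end

section
/- Let A be a unital C*-algebra and let p : A → A be a linear map that is positive (0 ≤ x implies 0 ≤ p(x)), unital (p(1) = 1), and satisfies the Kadison–Schwarz inequality: (p(a))² ≤ p(a²) for every self-adjoint a ∈ A. Then for any fixed self-adjoint a ∈ A, the following are equivalent: (a) p(a²) = (p(a))²; (b) p((ab+ba)/2) = (p(a)p(b)+p(b)p(a))/2 for every self-adjoint b ∈ A; (c) p(aba) = p(a)p(b)p(a) for every self-adjoint b ∈ A. -/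
/-! The defect `p (x ^ 2) - (p x) ^ 2` is a quadratic map with values in the positive cone. If it
vanishes at `a`, then at `t • a + b` it is affine in `t : ℝ`, and an affine map on the line with
values in a closed pointed cone has zero slope; the slope is the failure of `p` to preserve the
anticommutator of `a` and `b`. The equality passes to the powers of `a`, and the triple product is
recovered from anticommutators with `a` and `a ^ 2`:
`2 a b a = (a (a b + b a) + (a b + b a) a) - (a ^ 2 b + b a ^ 2)`. -/

section OrderedTopologicalModule

variable {E : Type*} [AddCommGroup E] [PartialOrder E] [Module ℝ E] [PosSMulMono ℝ E]
  [TopologicalSpace E] [ContinuousAdd E] [ContinuousSMul ℝ E] [ClosedIciTopology E]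

theorem nonneg_of_forall_pos_nonneg_smul_add {x y : E}
    (h : ∀ t : ℝ, 0 < t → 0 ≤ t • x + y) : 0 ≤ x := by
  have hlim : Filter.Tendsto (fun ε : ℝ => x + ε • y) (nhdsWithin 0 (Set.Ioi 0)) (nhds x) := by
    have hcont : Continuous fun ε : ℝ => x + ε • y := by fun_prop
    simpa using (hcont.tendsto 0).mono_left nhdsWithin_le_nhds
  refine ge_of_tendsto hlim (eventually_mem_nhdsWithin.mono fun ε (hε : 0 < ε) => ?_)
  simpa [smul_add, hε.ne'] using smul_nonneg hε.le (h ε⁻¹ (inv_pos.mpr hε))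

theorem eq_zero_of_forall_nonneg_smul_add [IsOrderedAddMonoid E] {x y : E}
    (h : ∀ t : ℝ, 0 ≤ t • x + y) : x = 0 := by
  have hneg : 0 ≤ -x :=
    nonneg_of_forall_pos_nonneg_smul_add (y := y) fun t _ => by simpa using h (-t)
  exact le_antisymm (neg_nonneg.mp hneg) (nonneg_of_forall_pos_nonneg_smul_add fun t _ => h t)

end OrderedTopologicalModule

theorem smul_add_sq {R A : Type*} [CommSemiring R] [Semiring A] [Algebra R A] (t : R) (x y : A) :
    (t • x + y) ^ 2 = t ^ 2 • x ^ 2 + t • (x * y + y * x) + y ^ 2 := by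
  simp only [sq, add_mul, mul_add, smul_mul_assoc, mul_smul_comm, smul_add, smul_smul]
  abel

theorem two_smul_mul_mul_self (R : Type*) {A : Type*} [Semiring R] [Ring A] [Module R A]
    (x y : A) : (2 : R) • (x * y * x) =
      x * (x * y + y * x) + (x * y + y * x) * x - (x ^ 2 * y + y * x ^ 2) := by
  rw [two_smul]
  noncomm_ring

theorem isSelfAdjoint_mul_add_mul {R : Type*} [NonUnitalSemiring R] [StarRing R] {a b : R}
    (ha : IsSelfAdjoint a) (hb : IsSelfAdjoint b) : IsSelfAdjoint (a * b + b * a) := by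
  simpa only [star_mul, ha.star_eq, hb.star_eq] using IsSelfAdjoint.add_star_self (a * b)

section KadisonSchwarz

variable {A B : Type*} [Ring A] [StarRing A] [Algebra ℝ A] [Ring B] [PartialOrder B] [Algebra ℝ B]

/-- The Kadison–Schwarz inequality for a linear map `p`, imposed on self-adjoint elements. `p` is
taken to be real linear because the self-adjoint elements form only a real subspace. -/
def KadisonSchwarz (p : A →ₗ[ℝ] B) : Prop :=
  ∀ a : A, IsSelfAdjoint a → p a ^ 2 ≤ p (a ^ 2)

namespace KadisonSchwarz

variable [StarModule ℝ A] [IsOrderedAddMonoid B] [PosSMulMono ℝ B]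
  [TopologicalSpace B] [ContinuousAdd B] [ContinuousSMul ℝ B] [ClosedIciTopology B]
  {p : A →ₗ[ℝ] B} {a b : A}

theorem map_mul_add_mul_of_map_sq_eq (hp : KadisonSchwarz p) (ha : IsSelfAdjoint a)
    (hpa : p (a ^ 2) = p a ^ 2) (hb : IsSelfAdjoint b) :
    p (a * b + b * a) = p a * p b + p b * p a := by
  refine sub_eq_zero.mp (eq_zero_of_forall_nonneg_smul_add (y := p (b ^ 2) - p b ^ 2) fun t => ?_)
  have hdefect : p ((t • a + b) ^ 2) - p (t • a + b) ^ 2 =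
      t • (p (a * b + b * a) - (p a * p b + p b * p a)) + (p (b ^ 2) - p b ^ 2) := by
    rw [map_add p (t • a), map_smul, smul_add_sq, smul_add_sq, map_add, map_add, map_smul,
      map_smul, hpa, smul_sub]
    abel
  rw [← hdefect]
  exact sub_nonneg.mpr (hp _ (((IsSelfAdjoint.all t).smul ha).add hb))

theorem map_pow_succ_of_map_sq_eq (hp : KadisonSchwarz p) (ha : IsSelfAdjoint a)
    (hpa : p (a ^ 2) = p a ^ 2) (n : ℕ) : p (a ^ (n + 1)) = p a ^ (n + 1) := by
  induction n with
  | zero => simp only [zero_add, pow_one]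
  | succ n ih =>
    have hdouble : (2 : ℝ) • p (a ^ (n + 2)) = (2 : ℝ) • p a ^ (n + 2) := by
      simpa only [ih, ← pow_succ, ← pow_succ', ← two_smul ℝ, map_smul]
        using hp.map_mul_add_mul_of_map_sq_eq ha hpa (ha.pow (n + 1))
    exact smul_right_injective B (two_ne_zero' ℝ) hdouble

theorem map_mul_mul_of_map_sq_eq (hp : KadisonSchwarz p) (ha : IsSelfAdjoint a)
    (hpa : p (a ^ 2) = p a ^ 2) (hb : IsSelfAdjoint b) :
    p (a * b * a) = p a * p b * p a := by
  have hpa_sq : p ((a ^ 2) ^ 2) = p (a ^ 2) ^ 2 := by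
    rw [hpa, ← pow_mul, ← pow_mul, hp.map_pow_succ_of_map_sq_eq ha hpa 3]
  have hdouble : (2 : ℝ) • p (a * b * a) = (2 : ℝ) • (p a * p b * p a) := by
    rw [← map_smul, two_smul_mul_mul_self, two_smul_mul_mul_self, map_sub,
      hp.map_mul_add_mul_of_map_sq_eq ha hpa (isSelfAdjoint_mul_add_mul ha hb),
      hp.map_mul_add_mul_of_map_sq_eq ha hpa hb,
      hp.map_mul_add_mul_of_map_sq_eq (ha.pow 2) hpa_sq hb, hpa]
  exact smul_right_injective B (two_ne_zero' ℝ) hdouble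

end KadisonSchwarz

theorem kadisonSchwarz_multiplicativity_equiv_general
    [StarModule ℝ A] [IsOrderedAddMonoid B] [PosSMulMono ℝ B]
    [TopologicalSpace B] [ContinuousAdd B] [ContinuousSMul ℝ B] [ClosedIciTopology B]
    {p : A →ₗ[ℝ] B} (hunital : p 1 = 1) (hp : KadisonSchwarz p) {a : A} (ha : IsSelfAdjoint a) :
    (p (a ^ 2) = p a ^ 2 ↔
      ∀ b : A, IsSelfAdjoint b →
        p ((2 : ℝ)⁻¹ • (a * b + b * a)) = (2 : ℝ)⁻¹ • (p a * p b + p b * p a)) ∧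
    (p (a ^ 2) = p a ^ 2 ↔
      ∀ b : A, IsSelfAdjoint b → p (a * b * a) = p a * p b * p a) := by
  refine ⟨⟨fun hpa b hb => ?_, fun hjordan => ?_⟩,
    ⟨fun hpa b hb => hp.map_mul_mul_of_map_sq_eq ha hpa hb, fun htriple => ?_⟩⟩
  · rw [map_smul, hp.map_mul_add_mul_of_map_sq_eq ha hpa hb]
  · simpa only [← two_smul ℝ, inv_smul_smul₀ (two_ne_zero' ℝ), ← sq] using hjordan a ha
  · simpa only [hunital, mul_one, ← sq] using htriple 1 (.one A)

end KadisonSchwarz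

/-- For a positive unital linear map `p` on a unital C*-algebra satisfying the
Kadison–Schwarz inequality, and a fixed self-adjoint `a`, the following are equivalent:
(a) `p (a²) = (p a)²`; (b) `p (a ∘ b) = p a ∘ p b` for all self-adjoint `b` (Jordan product);
(c) `p (a b a) = p a · p b · p a` for all self-adjoint `b`. -/
theorem kadisonSchwarz_multiplicativity_equiv
    (A : Type*) [CStarAlgebra A] [PartialOrder A] [StarOrderedRing A]
    (p : A →ₗ[ℂ] A)
    (hpos : ∀ x : A, 0 ≤ x → 0 ≤ p x)
    (hunital : p 1 = 1)
    (hKS : ∀ a : A, IsSelfAdjoint a → (p a) ^ 2 ≤ p (a ^ 2))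
    (a : A) (ha : IsSelfAdjoint a) :
    (p (a ^ 2) = (p a) ^ 2 ↔
      ∀ b : A, IsSelfAdjoint b →
        p ((2 : ℂ)⁻¹ • (a * b + b * a)) = (2 : ℂ)⁻¹ • (p a * p b + p b * p a)) ∧
    (p (a ^ 2) = (p a) ^ 2 ↔
      ∀ b : A, IsSelfAdjoint b → p (a * b * a) = p a * p b * p a) := by
  have inv_two_smul (x : A) : (2 : ℂ)⁻¹ • x = (2 : ℝ)⁻¹ • x :=
    mod_cast inv_natCast_smul_eq ℂ ℝ 2 x
  simpa only [inv_two_smul, LinearMap.coe_restrictScalars] using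
    kadisonSchwarz_multiplicativity_equiv_general (p := p.restrictScalars ℝ) hunital hKS ha
end

section
/- Let A be a unital C*-algebra and let p : A → A be a linear map that is positive (0 ≤ x implies 0 ≤ p(x)), unital (p(1) = 1), idempotent (p(p(x)) = p(x) for all x), and satisfies the Kadison–Schwarz inequality: (p(a))² ≤ p(a²) for every self-adjoint a ∈ A. Then for any fixed self-adjoint a ∈ A, the following are equivalent: (a) p(a²) = p((p(a))²); (b) p((ab+ba)/2) = p((p(a)p(b)+p(b)p(a))/2) for every self-adjoint b ∈ A; (c) p(aba) = p(p(a)p(b)p(a)) for every self-adjoint b ∈ A. -/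
/-!
Write `a = x + n` with `x = p a`. The Kadison–Schwarz inequality for `t • x + d` with `p d = 0`,
read as a quadratic inequality in `t`, forces `p (x ∘ d) = 0`. In particular
`p (a²) = p (x²) + p (n²)`, so (a) says that `p (n²) = 0`. By Cauchy–Schwarz for the positive map
`p`, this means that `p` kills every product having `n` as its first or last factor. Hence `a` may
be replaced by `x` in (b) and (c), and it remains to see that `p (x ∘ d) = 0` and `p (x d x) = 0`
when `p d = 0`; the latter reduces to the former because `p (x²) - x²` is a nonnegative element
of the kernel. Conversely, (b) at `b = a` is (a), and (c) along an approximate unit gives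
`p (a²) ≤ p (x²)`.
-/

open Filter Topology

section OrderedModule

variable {E : Type*} [AddCommGroup E] [PartialOrder E] [Module ℝ E] [PosSMulMono ℝ E]
  [TopologicalSpace E] [ContinuousAdd E] [ContinuousSMul ℝ E] [ClosedIciTopology E] {c e : E}

lemma nonneg_of_forall_pos_smul_add_nonneg (h : ∀ t : ℝ, 0 < t → 0 ≤ t • c + e) : 0 ≤ c := by
  have hlim : Tendsto (fun t : ℝ ↦ c + t⁻¹ • e) atTop (𝓝 c) := by
    simpa using ((tendsto_inv_atTop_zero (𝕜 := ℝ)).smul_const e).const_add c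
  refine ge_of_tendsto hlim ?_
  filter_upwards [eventually_gt_atTop 0] with t ht
  simpa [smul_smul, ht.ne'] using smul_nonneg (inv_nonneg.mpr ht.le) (h t ht)

lemma eq_zero_of_forall_smul_add_nonneg [IsOrderedAddMonoid E]
    (h : ∀ t : ℝ, 0 ≤ t • c + e) : c = 0 := by
  refine le_antisymm (neg_nonneg.mp ?_) (nonneg_of_forall_pos_smul_add_nonneg fun t _ ↦ h t)
  exact nonneg_of_forall_pos_smul_add_nonneg fun t _ ↦ by simpa using h (-t)

end OrderedModule

section LeftKernel

variable {A : Type*} [NonUnitalRing A] [StarRing A] [PartialOrder A] [StarOrderedRing A]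
  [Module ℂ A] [StarModule ℂ A] [IsScalarTower ℂ A A] [SMulCommClass ℂ A A]
  {E : Type*} [AddCommGroup E] [PartialOrder E] [IsOrderedAddMonoid E] [Module ℂ E]
  [PosSMulMono ℝ E] [TopologicalSpace E] [ContinuousAdd E] [ContinuousSMul ℝ E]
  [ClosedIciTopology E]
  {f : A →ₚ[ℂ] E} {y : A}

lemma map_star_mul_add_star_mul_eq_zero_of_map_star_mul_self (hy : f (star y * y) = 0) (z : A) :
    f (star y * z + star z * y) = 0 := by
  refine eq_zero_of_forall_smul_add_nonneg (e := f (star z * z)) fun t ↦ ?_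
  have hexpand : star (t • y + z) * (t • y + z) =
      (t * t) • (star y * y) + t • (star y * z + star z * y) + star z * z := by
    simp only [star_add, star_smul, star_trivial, add_mul, mul_add, smul_mul_assoc,
      mul_smul_comm, smul_add, mul_smul]
    abel
  have hnonneg := f.map_nonneg (star_mul_self_nonneg (t • y + z))
  simpa only [hexpand, map_add, f.map_smul_of_tower, hy, smul_zero, zero_add] using hnonneg

lemma map_star_mul_eq_zero_of_map_star_mul_self (hy : f (star y * y) = 0) (z : A) :
    f (star y * z) = 0 := by
  have hadd : f (star y * z) + f (star z * y) = 0 := by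
    simpa only [map_add] using map_star_mul_add_star_mul_eq_zero_of_map_star_mul_self hy z
  have hsub : f (star y * z) - f (star z * y) = 0 := by
    have hI := map_star_mul_add_star_mul_eq_zero_of_map_star_mul_self hy (Complex.I • z)
    simpa [mul_smul_comm, smul_mul_assoc, ← sub_eq_add_neg, ← smul_sub] using hI
  rw [← sub_eq_zero.mp hsub, ← two_smul ℂ] at hadd
  simpa using hadd

lemma map_mul_eq_zero_of_map_star_mul_self (hy : f (star y * y) = 0) (z : A) : f (z * y) = 0 := by
  simpa [map_star_mul_eq_zero_of_map_star_mul_self hy] using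
    map_star_mul_add_star_mul_eq_zero_of_map_star_mul_self hy (star z)

end LeftKernel

section CStarAlgebra

variable {A : Type*} [NonUnitalCStarAlgebra A] [PartialOrder A] [StarOrderedRing A]

lemma mul_self_le_norm_smul {u : A} (hu : 0 ≤ u) : u * u ≤ ‖u‖ • u := by
  have hsa : star (CFC.sqrt u) = CFC.sqrt u := (CFC.sqrt_nonneg u).star_eq
  have hsq : CFC.sqrt u * CFC.sqrt u = u := CFC.sqrt_mul_sqrt_self u hu
  calc
    u * u = star (CFC.sqrt u) * u * CFC.sqrt u := by
      rw [hsa]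
      nth_rw 1 2 4 [← hsq]
      simp only [mul_assoc]
    _ ≤ ‖u‖ • (star (CFC.sqrt u) * CFC.sqrt u) :=
      CStarAlgebra.star_left_conjugate_le_norm_smul hu.isSelfAdjoint
    _ = ‖u‖ • u := by rw [hsa, hsq]

lemma map_mul_add_mul_eq_zero_of_nonneg {E : Type*} [AddCommGroup E] [PartialOrder E]
    [IsOrderedAddMonoid E] [Module ℂ E] [PosSMulMono ℝ E] [TopologicalSpace E] [ContinuousAdd E]
    [ContinuousSMul ℝ E] [ClosedIciTopology E] {f : A →ₚ[ℂ] E} {m : A} (hm : 0 ≤ m)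
    (hfm : f m = 0) (z : A) : f (m * z + z * m) = 0 := by
  have hsa : star (CFC.sqrt m) = CFC.sqrt m := (CFC.sqrt_nonneg m).star_eq
  have hsq : CFC.sqrt m * CFC.sqrt m = m := CFC.sqrt_mul_sqrt_self m hm
  have hker : f (star (CFC.sqrt m) * CFC.sqrt m) = 0 := by rw [hsa, hsq, hfm]
  have hleft := map_star_mul_eq_zero_of_map_star_mul_self hker (CFC.sqrt m * z)
  have hright := map_mul_eq_zero_of_map_star_mul_self hker (z * CFC.sqrt m)
  rw [hsa, ← mul_assoc, hsq] at hleft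
  rw [mul_assoc, hsq] at hright
  rw [map_add, hleft, hright, add_zero]

end CStarAlgebra

/-- The Kadison–Schwarz inequality `(p a)² ≤ p (a²)` for a positive linear map, required on
self-adjoint elements only. It is written with products because a non-unital algebra has no
powers. -/
def IsKadisonSchwarz {A B : Type*} [NonUnitalCStarAlgebra A] [PartialOrder A]
    [NonUnitalCStarAlgebra B] [PartialOrder B] (p : A →ₚ[ℂ] B) : Prop :=
  ∀ a : A, IsSelfAdjoint a → p a * p a ≤ p (a * a)

namespace IsKadisonSchwarz

variable {A : Type*} [NonUnitalCStarAlgebra A] [PartialOrder A] {p : A →ₚ[ℂ] A} {a b d x : A}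

lemma map_mul_self_map_le (hp : IsKadisonSchwarz p) (hidem : ∀ x, p (p x) = p x)
    (ha : IsSelfAdjoint a) : p (p a * p a) ≤ p (a * a) := by
  simpa only [hidem] using OrderHomClass.mono p (hp a ha)

variable [StarOrderedRing A]

lemma norm_map_le_of_nonneg {B : Type*} [NonUnitalCStarAlgebra B] [PartialOrder B]
    [StarOrderedRing B] {p : A →ₚ[ℂ] B} (hp : IsKadisonSchwarz p) {u : A} (hu : 0 ≤ u) :
    ‖p u‖ ≤ ‖u‖ := by
  have hpu : IsSelfAdjoint (p u) := (p.map_nonneg hu).isSelfAdjoint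
  have hle : p u * p u ≤ ‖u‖ • p u := calc
    p u * p u ≤ p (u * u) := hp u hu.isSelfAdjoint
    _ ≤ p (‖u‖ • u) := OrderHomClass.mono p (mul_self_le_norm_smul hu)
    _ = ‖u‖ • p u := p.map_smul_of_tower _ _
  have hnorm : ‖p u‖ * ‖p u‖ ≤ ‖u‖ * ‖p u‖ := by
    simpa [hpu.norm_mul_self, sq, norm_smul] using
      CStarAlgebra.norm_le_norm_of_nonneg_of_le hpu.mul_self_nonneg hle
  rcases (norm_nonneg (p u)).eq_or_lt with hzero | hpos
  · exact hzero ▸ norm_nonneg u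
  · exact le_of_mul_le_mul_right hnorm hpos

lemma map_mul_self_le_of_map_conj (hp : IsKadisonSchwarz p) (ha : IsSelfAdjoint a)
    (h : ∀ b : A, 0 ≤ b → p (a * b * a) = p (p a * p b * p a)) :
    p (a * a) ≤ p (p a * p a) := by
  have hu := CStarAlgebra.increasingApproximateUnit A
  have hlim : Tendsto (fun u ↦ p (a * u * a)) (CStarAlgebra.approximateUnit A)
      (𝓝 (p (a * a))) :=
    ((map_continuous p).tendsto _).comp ((hu.tendsto_mul_left a).mul_const a)
  refine le_of_tendsto hlim ?_
  filter_upwards [hu.eventually_nonneg, hu.eventually_norm] with u hu_nonneg hu_norm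
  rw [h u hu_nonneg]
  have hpa : IsSelfAdjoint (p a) := ha.map' p
  refine OrderHomClass.mono p ?_
  calc
    p a * p u * p a ≤ ‖p u‖ • (p a * p a) := by
      simpa only [hpa.star_eq] using CStarAlgebra.star_left_conjugate_le_norm_smul (a := p a)
        (p.map_nonneg hu_nonneg).isSelfAdjoint
    _ ≤ p a * p a := smul_le_of_le_one_left hpa.mul_self_nonneg
      ((hp.norm_map_le_of_nonneg hu_nonneg).trans hu_norm)

lemma map_jordan_eq_zero_of_map_eq (hp : IsKadisonSchwarz p) (hidem : ∀ x, p (p x) = p x)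
    (hx : IsSelfAdjoint x) (hpx : p x = x) (hd : IsSelfAdjoint d) (hpd : p d = 0) :
    p (x * d + d * x) = 0 := by
  refine eq_zero_of_forall_smul_add_nonneg (e := p (d * d)) fun t ↦ ?_
  have hexpand : (t • x + d) * (t • x + d) =
      (t • x) * (t • x) + t • (x * d + d * x) + d * d := by
    simp only [add_mul, mul_add, smul_mul_assoc, mul_smul_comm, smul_add]
    abel
  have hle := hp.map_mul_self_map_le hidem (((IsSelfAdjoint.all t).smul hx).add hd)
  rw [map_add, p.map_smul_of_tower, hpx, hpd, add_zero, hexpand, map_add, map_add, add_assoc,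
    le_add_iff_nonneg_right, p.map_smul_of_tower] at hle
  exact hle

lemma map_conj_eq_zero_of_map_eq (hp : IsKadisonSchwarz p) (hidem : ∀ x, p (p x) = p x)
    (hx : IsSelfAdjoint x) (hpx : p x = x) (hd : IsSelfAdjoint d) (hpd : p d = 0) :
    p (x * d * x) = 0 := by
  set j := x * d + d * x with hj
  set y := p (x * x)
  have hj_sa : IsSelfAdjoint j := by
    simp [hj, isSelfAdjoint_iff, hx.star_eq, hd.star_eq, add_comm]
  have hy_sa : IsSelfAdjoint y := hx.mul_self_nonneg.isSelfAdjoint.map' p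
  have hpj : p j = 0 := hp.map_jordan_eq_zero_of_map_eq hidem hx hpx hd hpd
  have hxj : p (x * j + j * x) = 0 := hp.map_jordan_eq_zero_of_map_eq hidem hx hpx hj_sa hpj
  have hyd : p (y * d + d * y) = 0 := hp.map_jordan_eq_zero_of_map_eq hidem hy_sa (hidem _) hd hpd
  have hmd : p ((y - x * x) * d + d * (y - x * x)) = 0 := by
    refine map_mul_add_mul_eq_zero_of_nonneg (sub_nonneg.mpr ?_) ?_ d
    · simpa only [hpx] using hp x hx
    · rw [map_sub, hidem, sub_self]
  have hexpand : (2 : ℂ) • (x * d * x) = (x * j + j * x) - (y * d + d * y)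
      + ((y - x * x) * d + d * (y - x * x)) := by
    rw [hj, two_smul]
    noncomm_ring
  have htwo : (2 : ℂ) • p (x * d * x) = 0 := by
    rw [← map_smul, hexpand, map_add, map_sub, hxj, hyd, hmd, sub_zero, add_zero]
  simpa using htwo

lemma map_mul_self_eq_add (hp : IsKadisonSchwarz p) (hidem : ∀ x, p (p x) = p x)
    (ha : IsSelfAdjoint a) :
    p (a * a) = p (p a * p a) + p ((a - p a) * (a - p a)) := by
  have hpa : IsSelfAdjoint (p a) := ha.map' p
  have hcross : p (p a * (a - p a) + (a - p a) * p a) = 0 :=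
    hp.map_jordan_eq_zero_of_map_eq hidem hpa (hidem a) (ha.sub hpa)
      (by rw [map_sub, hidem, sub_self])
  have hexpand : a * a = p a * p a + (p a * (a - p a) + (a - p a) * p a)
      + (a - p a) * (a - p a) := by
    noncomm_ring
  conv_lhs => rw [hexpand, map_add, map_add, hcross, add_zero]

lemma map_star_sub_map_mul_self_eq_zero (hp : IsKadisonSchwarz p) (hidem : ∀ x, p (p x) = p x)
    (ha : IsSelfAdjoint a) (h : p (a * a) = p (p a * p a)) :
    p (star (a - p a) * (a - p a)) = 0 := by
  rw [(ha.sub (ha.map' p)).star_eq]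
  simpa only [h, left_eq_add] using hp.map_mul_self_eq_add hidem ha

lemma map_sub_map_mul_eq_zero (hp : IsKadisonSchwarz p) (hidem : ∀ x, p (p x) = p x)
    (ha : IsSelfAdjoint a) (h : p (a * a) = p (p a * p a)) (z : A) :
    p ((a - p a) * z) = 0 := by
  simpa only [(ha.sub (ha.map' p)).star_eq] using map_star_mul_eq_zero_of_map_star_mul_self
    (hp.map_star_sub_map_mul_self_eq_zero hidem ha h) z

lemma map_mul_sub_map_eq_zero (hp : IsKadisonSchwarz p) (hidem : ∀ x, p (p x) = p x)
    (ha : IsSelfAdjoint a) (h : p (a * a) = p (p a * p a)) (z : A) :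
    p (z * (a - p a)) = 0 :=
  map_mul_eq_zero_of_map_star_mul_self (hp.map_star_sub_map_mul_self_eq_zero hidem ha h) z

lemma map_jordan_eq_map_jordan_map (hp : IsKadisonSchwarz p) (hidem : ∀ x, p (p x) = p x)
    (ha : IsSelfAdjoint a) (h : p (a * a) = p (p a * p a)) (hb : IsSelfAdjoint b) :
    p (a * b + b * a) = p (p a * p b + p b * p a) := by
  set n := a - p a with hn
  set d := b - p b with hd
  have hnb : p (n * b) = 0 := hp.map_sub_map_mul_eq_zero hidem ha h b
  have hbn : p (b * n) = 0 := hp.map_mul_sub_map_eq_zero hidem ha h b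
  have hxd : p (p a * d + d * p a) = 0 :=
    hp.map_jordan_eq_zero_of_map_eq hidem (ha.map' p) (hidem a) (hb.sub (hb.map' p))
      (by rw [hd, map_sub, hidem, sub_self])
  have hexpand : a * b + b * a = (p a * p b + p b * p a) + (p a * d + d * p a) +
      n * b + b * n := by
    rw [hn, hd]
    noncomm_ring
  rw [hexpand, map_add, map_add, map_add _ _ (_ + _), hxd, hnb, hbn]
  simp only [add_zero]

lemma map_conj_eq_map_conj_map (hp : IsKadisonSchwarz p) (hidem : ∀ x, p (p x) = p x)
    (ha : IsSelfAdjoint a) (h : p (a * a) = p (p a * p a)) (hb : IsSelfAdjoint b) :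
    p (a * b * a) = p (p a * p b * p a) := by
  set n := a - p a with hn
  set d := b - p b with hd
  have hnba : p (n * (b * a)) = 0 := hp.map_sub_map_mul_eq_zero hidem ha h (b * a)
  have hxbn : p (p a * b * n) = 0 := hp.map_mul_sub_map_eq_zero hidem ha h (p a * b)
  have hxdx : p (p a * d * p a) = 0 :=
    hp.map_conj_eq_zero_of_map_eq hidem (ha.map' p) (hidem a) (hb.sub (hb.map' p))
      (by rw [hd, map_sub, hidem, sub_self])
  have hexpand : a * b * a = p a * p b * p a + p a * d * p a + p a * b * n + n * (b * a) := by
    rw [hn, hd]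
    noncomm_ring
  rw [hexpand, map_add, map_add, map_add, hxdx, hxbn, hnba]
  simp only [add_zero]

end IsKadisonSchwarz

theorem kadisonSchwarz_idempotent_multiplicativity_equiv_general
    {A : Type*} [NonUnitalCStarAlgebra A] [PartialOrder A] [StarOrderedRing A]
    {p : A →ₚ[ℂ] A} (hp : IsKadisonSchwarz p) (hidem : ∀ x : A, p (p x) = p x)
    {a : A} (ha : IsSelfAdjoint a) :
    (p (a * a) = p (p a * p a) ↔
      ∀ b : A, IsSelfAdjoint b →
        p ((2 : ℂ)⁻¹ • (a * b + b * a)) = p ((2 : ℂ)⁻¹ • (p a * p b + p b * p a))) ∧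
    (p (a * a) = p (p a * p a) ↔
      ∀ b : A, IsSelfAdjoint b → p (a * b * a) = p (p a * p b * p a)) := by
  refine ⟨⟨fun h b hb ↦ ?_, fun h ↦ ?_⟩, fun h b hb ↦ ?_, fun h ↦ ?_⟩
  · rw [map_smul, map_smul, hp.map_jordan_eq_map_jordan_map hidem ha h hb]
  · have half_add_self (y : A) : (2 : ℂ)⁻¹ • (y + y) = y := by
      rw [← two_smul ℂ y, inv_smul_smul₀ two_ne_zero]
    simpa only [half_add_self] using h a ha
  · exact hp.map_conj_eq_map_conj_map hidem ha h hb
  · exact (hp.map_mul_self_le_of_map_conj ha fun b hb ↦ h b hb.isSelfAdjoint).antisymm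
      (hp.map_mul_self_map_le hidem ha)

/-- For a positive unital idempotent linear map `p` on a unital C*-algebra
satisfying the Kadison–Schwarz inequality, and a fixed self-adjoint `a`, the following are
equivalent: (a) `p (a²) = p ((p a)²)`; (b) `p (a ∘ b) = p (p a ∘ p b)` for all self-adjoint
`b` (Jordan product); (c) `p (a b a) = p (p a · p b · p a)` for all self-adjoint `b`. -/
theorem kadisonSchwarz_idempotent_multiplicativity_equiv
    (A : Type*) [CStarAlgebra A] [PartialOrder A] [StarOrderedRing A]
    (p : A →ₗ[ℂ] A)
    (hpos : ∀ x : A, 0 ≤ x → 0 ≤ p x)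
    (hunital : p 1 = 1)
    (hidem : ∀ x : A, p (p x) = p x)
    (hKS : ∀ a : A, IsSelfAdjoint a → (p a) ^ 2 ≤ p (a ^ 2))
    (a : A) (ha : IsSelfAdjoint a) :
    (p (a ^ 2) = p ((p a) ^ 2) ↔
      ∀ b : A, IsSelfAdjoint b →
        p ((2 : ℂ)⁻¹ • (a * b + b * a)) = p ((2 : ℂ)⁻¹ • (p a * p b + p b * p a))) ∧
    (p (a ^ 2) = p ((p a) ^ 2) ↔
      ∀ b : A, IsSelfAdjoint b → p (a * b * a) = p (p a * p b * p a)) := by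
  simp only [sq] at hKS ⊢
  exact kadisonSchwarz_idempotent_multiplicativity_equiv_general (p := .mk₀ p hpos) hKS hidem ha
end

section
/- Let A be a unital C*-algebra and let E(A) = {a ∈ A : 0 ≤ a ≤ 1}. Let τ : E(A) → E(A) satisfy τ(1) = 1, τ(a+b) = τ(a)+τ(b) whenever a, b and a+b all lie in E(A), and the conditional expectation property: τ(τ(a)·b·τ(a)) = τ(a)·τ(b)·τ(a) for all a, b ∈ E(A). Then τ is idempotent, i.e., τ(τ(a)) = τ(a) for every a ∈ E(A) (so τ is a state operator), and moreover τ(τ(a)²) = τ(a)² for every a ∈ E(A). -/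
/-!
Write `e = τ a`. The conditional expectation property at `b = 1` says that `τ` fixes `e ^ 2` and,
applied to the effect `1 - a` instead of `a`, that it fixes `(1 - e) ^ 2`. Both squares have the
same defect `e - e ^ 2 = (1 - e) - (1 - e) ^ 2`, which is an effect, and computing `τ` of it in
these two ways gives `τ e - e ^ 2 = (1 - τ e) - (1 - e) ^ 2`, that is, `2 τ e = 2 e`.
-/

open Set

/-- An endomorphism of the effect algebra `E(A) = Icc 0 1`: a unital map from effects to effects
that preserves those sums of effects which are again effects. It is encoded as a function on all
of `A`, whose values outside `Icc 0 1` are irrelevant. -/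
structure IsEffectEndomorphism {A : Type*} [Zero A] [One A] [Add A] [Preorder A]
    (τ : A → A) : Prop where
  map_mem : ∀ a ∈ Icc (0 : A) 1, τ a ∈ Icc (0 : A) 1
  map_one : τ 1 = 1
  map_add : ∀ a ∈ Icc (0 : A) 1, ∀ b ∈ Icc (0 : A) 1,
    a + b ∈ Icc (0 : A) 1 → τ (a + b) = τ a + τ b

namespace IsEffectEndomorphism

section OrderedGroup

variable {A : Type*} [AddCommGroup A] [One A] [PartialOrder A] [IsOrderedAddMonoid A]
  {τ : A → A} {a b : A}

theorem map_sub (hτ : IsEffectEndomorphism τ) (ha : a ∈ Icc 0 1) (hb : b ∈ Icc 0 1)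
    (hab : a ≤ b) : τ (b - a) = τ b - τ a := by
  have hsub : b - a ∈ Icc 0 1 := ⟨sub_nonneg.2 hab, (sub_le_self b ha.1).trans hb.2⟩
  have hadd := hτ.map_add (b - a) hsub a ha (by rwa [sub_add_cancel])
  rw [sub_add_cancel] at hadd
  exact eq_sub_of_add_eq hadd.symm

theorem map_one_sub (hτ : IsEffectEndomorphism τ) (ha : a ∈ Icc 0 1) : τ (1 - a) = 1 - τ a := by
  rw [hτ.map_sub ha (right_mem_Icc.2 (ha.1.trans ha.2)) ha.2, hτ.map_one]

end OrderedGroup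

end IsEffectEndomorphism

section StarOrderedRing

variable {A : Type*} [Ring A] [PartialOrder A] [StarRing A] [StarOrderedRing A]

theorem sq_le_self_of_mem_Icc {x : A} (hx : x ∈ Icc 0 1) : x ^ 2 ≤ x := by
  have hx' : 0 ≤ 1 - x := sub_nonneg.2 hx.2
  have hdecomp : x - x ^ 2 = x * (1 - x) * x + (1 - x) * x * (1 - x) := by noncomm_ring
  rw [← sub_nonneg, hdecomp]
  exact add_nonneg (conjugate_nonneg_of_nonneg hx' hx.1) (conjugate_nonneg_of_nonneg hx.1 hx')

theorem sq_mem_Icc_of_mem_Icc {x : A} (hx : x ∈ Icc 0 1) : x ^ 2 ∈ Icc 0 1 :=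
  ⟨(IsSelfAdjoint.of_nonneg hx.1).sq_nonneg, (sq_le_self_of_mem_Icc hx).trans hx.2⟩

namespace IsEffectEndomorphism

variable {τ : A → A}

theorem map_sub_sq (hτ : IsEffectEndomorphism τ) {x : A} (hx : x ∈ Icc 0 1) :
    τ (x - x ^ 2) = τ x - τ (x ^ 2) :=
  hτ.map_sub (sq_mem_Icc_of_mem_Icc hx) hx (sq_le_self_of_mem_Icc hx)

theorem map_eq_self_of_map_sq_eq [IsAddTorsionFree A] (hτ : IsEffectEndomorphism τ) {x : A}
    (hx : x ∈ Icc 0 1) (hsq : τ (x ^ 2) = x ^ 2) (hsq' : τ ((1 - x) ^ 2) = (1 - x) ^ 2) :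
    τ x = x := by
  have hdefect : x - x ^ 2 = (1 - x) - (1 - x) ^ 2 := by noncomm_ring
  have htwo : 2 • τ x = 2 • x := by
    have hτdefect : τ x - x ^ 2 = (1 - τ x) - (1 - x) ^ 2 := by
      rw [← hsq, ← hτ.map_sub_sq hx, hdefect,
        hτ.map_sub_sq (sub_mem_Icc_zero_iff_right.2 hx), hτ.map_one_sub hx, hsq']
    calc 2 • τ x = (τ x - x ^ 2) + τ x + x ^ 2 := by abel
      _ = (1 - τ x) - (1 - x) ^ 2 + τ x + x ^ 2 := by rw [hτdefect]
      _ = 2 • x := by noncomm_ring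
  exact nsmul_right_injective two_ne_zero htwo

theorem map_map_of_map_sq_map [IsAddTorsionFree A] (hτ : IsEffectEndomorphism τ)
    (hsq : ∀ a ∈ Icc (0 : A) 1, τ (τ a ^ 2) = τ a ^ 2) {a : A} (ha : a ∈ Icc 0 1) :
    τ (τ a) = τ a := by
  refine hτ.map_eq_self_of_map_sq_eq (hτ.map_mem a ha) (hsq a ha) ?_
  rw [← hτ.map_one_sub ha]
  exact hsq (1 - a) (sub_mem_Icc_zero_iff_right.2 ha)

end IsEffectEndomorphism

theorem conditionalExpectation_is_stateOperator_general [IsAddTorsionFree A] {τ : A → A}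
    (hτ : IsEffectEndomorphism τ)
    (hce : ∀ a ∈ Icc (0 : A) 1, ∀ b ∈ Icc (0 : A) 1, τ (τ a * b * τ a) = τ a * τ b * τ a) :
    ∀ a ∈ Icc (0 : A) 1, τ (τ a) = τ a ∧ τ (τ a ^ 2) = τ a ^ 2 := by
  have hsq : ∀ a ∈ Icc (0 : A) 1, τ (τ a ^ 2) = τ a ^ 2 := fun a ha => by
    simpa only [hτ.map_one, mul_one, sq] using hce a ha 1 (right_mem_Icc.2 zero_le_one)
  exact fun a ha => ⟨hτ.map_map_of_map_sq_map hsq ha, hsq a ha⟩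

end StarOrderedRing

/-- A unital additive map `τ` on the effect algebra `E(A) = {a : 0 ≤ a ≤ 1}` of a
unital C*-algebra satisfying the conditional expectation property
`τ (τ a · b · τ a) = τ a · τ b · τ a` is idempotent (hence a state operator), and moreover
`τ ((τ a)²) = (τ a)²` for every effect `a`. -/
theorem conditionalExpectation_is_stateOperator
    (A : Type*) [CStarAlgebra A] [PartialOrder A] [StarOrderedRing A]
    (τ : A → A)
    (hmaps : ∀ a ∈ Set.Icc (0 : A) 1, τ a ∈ Set.Icc (0 : A) 1)
    (hunital : τ 1 = 1)
    (hadd : ∀ a ∈ Set.Icc (0 : A) 1, ∀ b ∈ Set.Icc (0 : A) 1,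
      a + b ∈ Set.Icc (0 : A) 1 → τ (a + b) = τ a + τ b)
    (hce : ∀ a ∈ Set.Icc (0 : A) 1, ∀ b ∈ Set.Icc (0 : A) 1,
      τ (τ a * b * τ a) = τ a * τ b * τ a) :
    ∀ a ∈ Set.Icc (0 : A) 1, τ (τ a) = τ a ∧ τ ((τ a) ^ 2) = (τ a) ^ 2 := by
  have : IsAddTorsionFree A := .of_isTorsionFree ℝ A
  exact conditionalExpectation_is_stateOperator_general ⟨hmaps, hunital, hadd⟩ hce
end

section
/- Let A be a unital C*-algebra, E(A) = {a ∈ A : 0 ≤ a ≤ 1}, and let τ : E(A) → E(A) be a state operator (unital, additive and idempotent). Then τ satisfies the conditional expectation property τ(τ(a)·b·τ(a)) = τ(a)·τ(b)·τ(a) for all a, b ∈ E(A) if and only if the range of τ is closed under squaring, i.e., for every a ∈ E(A) there exists b ∈ E(A) with (τ(a))² = τ(b). -/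
/-!
An additive map on the effects of `A` extends to a positive additive map `T` on `A`, with
`T 1 ≤ 1`. Evaluating Bernstein polynomials at an effect gives finite families of positive elements
summing to `1`. Discrete Jensen inequalities for their images under `T` yield, in the limit,
Kadison's inequality `T a ^ 2 ≤ T (a ^ 2)` for self-adjoint `a`.

If equality holds at `x`, then applying Kadison's inequality to `n • x + b` and letting `n → ∞`
shows that `T` preserves the Jordan product with `x`. Since
`2 • (x * b * x) = x * (x * b + b * x) + (x * b + b * x) * x - (x ^ 2 * b + b * x ^ 2)`,
it follows that `T (x * b * x) = T x * T b * T x`. When the range of `τ` is closed under squaring,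
equality holds at every `x = τ a`. Conversely, the conditional expectation property forces
`e = T 1` to be a projection, so that `τ a * τ 1 * τ a = τ a ^ 2` because `0 ≤ τ a ≤ e`.
-/

open scoped ComplexStarModule

section OrderedModule

theorem nonpos_of_forall_nsmul_le {E : Type*} [AddCommGroup E] [PartialOrder E] [Module ℝ E]
    [PosSMulMono ℝ E] [TopologicalSpace E] [ContinuousSMul ℝ E] [ClosedIciTopology E] {c d : E}
    (h : ∀ n : ℕ, 0 < n → n • d ≤ c) : d ≤ 0 := by
  have hlim : Filter.Tendsto (fun n : ℕ => (n : ℝ)⁻¹ • c) Filter.atTop (nhds 0) := by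
    simpa only [zero_smul] using (tendsto_inv_atTop_nhds_zero_nat (𝕜 := ℝ)).smul_const c
  refine ge_of_tendsto hlim ?_
  filter_upwards [Filter.eventually_gt_atTop 0] with n hn
  have hn' : (0 : ℝ) < n := by exact_mod_cast hn
  rw [le_inv_smul_iff_of_pos hn', Nat.cast_smul_eq_nsmul]
  exact h n hn

theorem nsmul_inv_natCast_smul {K E : Type*} [DivisionRing K] [CharZero K] [AddCommGroup E]
    [Module K E] {n : ℕ} (hn : 0 < n) (a : E) : n • ((n : K)⁻¹ • a) = a := by
  rw [← Nat.cast_smul_eq_nsmul K, smul_inv_smul₀ (by exact_mod_cast hn.ne')]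

theorem inv_natCast_smul_mem_Icc_s7 (K : Type*) {A : Type*} [Field K] [LinearOrder K]
    [IsStrictOrderedRing K] [AddCommGroupWithOne A] [PartialOrder A] [Module K A] [PosSMulMono K A]
    {a : A} {n : ℕ} (hn : 0 < n) (ha : a ∈ Set.Icc (0 : A) n) :
    (n : K)⁻¹ • a ∈ Set.Icc (0 : A) 1 := by
  have hn' : (0 : K) < n := by exact_mod_cast hn
  refine ⟨smul_nonneg (inv_nonneg.2 hn'.le) ha.1, ?_⟩
  rw [inv_smul_le_iff_of_pos hn', Nat.cast_smul_eq_nsmul, nsmul_one]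
  exact ha.2

end OrderedModule

section DiscreteJensen

theorem sq_sum_smul_le_sum_sq_smul {ι R A : Type*} [CommSemiring R] [StarRing R] [TrivialStar R]
    [Ring A] [StarRing A] [PartialOrder A] [StarOrderedRing A] [Algebra R A] [StarModule R A]
    (s : Finset ι) (c : ι → R) (p : ι → A) (hp : ∀ i ∈ s, 0 ≤ p i) (hsum : ∑ i ∈ s, p i ≤ 1) :
    (∑ i ∈ s, c i • p i) ^ 2 ≤ ∑ i ∈ s, c i ^ 2 • p i := by
  set m := ∑ i ∈ s, c i • p i with hm
  have hmsa : IsSelfAdjoint m := isSelfAdjoint_sum _ fun i hi =>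
    (IsSelfAdjoint.all (c i)).smul (.of_nonneg (hp i hi))
  have hvar : 0 ≤ ∑ i ∈ s, (algebraMap R A (c i) - m) * p i * (algebraMap R A (c i) - m) :=
    Finset.sum_nonneg fun i hi => IsSelfAdjoint.conjugate_nonneg (hp i hi) <|
      .sub (.algebraMap A (.all (c i))) hmsa
  have hexpand : ∑ i ∈ s, (algebraMap R A (c i) - m) * p i * (algebraMap R A (c i) - m) =
      ∑ i ∈ s, c i ^ 2 • p i - m ^ 2 - m ^ 2 + m * (∑ i ∈ s, p i) * m := by
    have hterm (i : ι) : (algebraMap R A (c i) - m) * p i * (algebraMap R A (c i) - m) =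
        c i ^ 2 • p i - m * (c i • p i) - (c i • p i) * m + m * p i * m := by
      simp only [Algebra.algebraMap_eq_smul_one, sub_mul, mul_sub, smul_mul_assoc, mul_smul_comm,
        one_mul, mul_one, smul_sub, mul_smul, sq]
      abel
    simp only [hterm, Finset.sum_add_distrib, Finset.sum_sub_distrib, ← Finset.mul_sum,
      ← Finset.sum_mul, ← hm, ← sq]
  have hmass : m * (∑ i ∈ s, p i) * m ≤ m ^ 2 := by
    simpa only [mul_one, ← sq] using hmsa.conjugate_le_conjugate hsum
  rw [hexpand, sub_add, sub_nonneg] at hvar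
  rw [← sub_nonneg]
  exact (sub_nonneg.2 hmass).trans hvar

end DiscreteJensen

section Bernstein

open Polynomial

variable {R : Type*} [CommRing R]

theorem sum_two_mul_sub_zsmul_bernstein (n : ℕ) :
    ∑ k ∈ Finset.range (n + 1), (2 * k - n : ℤ) • bernsteinPolynomial R n k =
      n • (2 * X - 1) := by
  have hmean := bernsteinPolynomial.sum_smul R n
  have htotal := bernsteinPolynomial.sum R n
  simp only [zsmul_eq_mul, nsmul_eq_mul, Int.cast_sub, Int.cast_mul, Int.cast_ofNat,
    Int.cast_natCast, sub_mul, mul_assoc, Finset.sum_sub_distrib, ← Finset.mul_sum] at hmean ⊢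
  rw [hmean, htotal]
  ring

theorem sum_two_mul_sub_sq_zsmul_bernstein (n : ℕ) :
    ∑ k ∈ Finset.range (n + 1), (2 * k - n : ℤ) ^ 2 • bernsteinPolynomial R n k =
      n ^ 2 • (2 * X - 1) ^ 2 + n • (4 * (X * (1 - X))) := by
  have hvar := bernsteinPolynomial.variance R n
  have hmean := sum_two_mul_sub_zsmul_bernstein (R := R) n
  have htotal := bernsteinPolynomial.sum R n
  have hterm (k : ℕ) : (2 * k - n : ℤ) ^ 2 • bernsteinPolynomial R n k =
      4 * ((n • X - (k : R[X])) ^ 2 * bernsteinPolynomial R n k)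
        + 2 * (n : R[X]) * (2 * X - 1) * ((2 * k - n : ℤ) • bernsteinPolynomial R n k)
        - (n : R[X]) ^ 2 * (2 * X - 1) ^ 2 * bernsteinPolynomial R n k := by
    simp only [zsmul_eq_mul, nsmul_eq_mul]
    push_cast
    ring
  simp only [hterm, Finset.sum_add_distrib, Finset.sum_sub_distrib, ← Finset.mul_sum]
  rw [hvar, hmean, htotal]
  simp only [nsmul_eq_mul]
  push_cast
  ring

end Bernstein

section CStarAlgebra

variable {A : Type*} [CStarAlgebra A] [PartialOrder A] [StarOrderedRing A]

theorem aeval_bernstein_nonneg {a : A} (ha : a ∈ Set.Icc (0 : A) 1) (n k : ℕ) :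
    0 ≤ Polynomial.aeval a (bernsteinPolynomial ℤ n k) := by
  have hcomm : Commute (a ^ k) ((1 - a) ^ (n - k)) :=
    ((Commute.one_right a).sub_right (Commute.refl a)).pow_pow _ _
  have hprod := hcomm.mul_nonneg (CStarAlgebra.pow_nonneg ha.1 k)
    (CStarAlgebra.pow_nonneg (sub_nonneg.2 ha.2) (n - k))
  simpa [bernsteinPolynomial, mul_assoc, ← nsmul_eq_mul] using nsmul_nonneg hprod (n.choose k)

theorem conjugate_mem_Icc {a b : A} (ha : a ∈ Set.Icc (0 : A) 1) (hb : b ∈ Set.Icc (0 : A) 1) :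
    a * b * a ∈ Set.Icc (0 : A) 1 := by
  refine ⟨conjugate_nonneg_of_nonneg hb.1 ha.1, ?_⟩
  calc a * b * a ≤ a * 1 * a := conjugate_le_conjugate_of_nonneg hb.2 ha.1
    _ = a ^ 2 := by rw [mul_one, sq]
    _ ≤ 1 := by simpa only [pow_zero] using CStarAlgebra.pow_antitone ha.1 ha.2 (Nat.zero_le 2)

theorem isStarProjection_of_pow_three_eq {a : A} (ha : a ∈ Set.Icc (0 : A) 1) (h : a ^ 3 = a) :
    IsStarProjection a := by
  have hanti := CStarAlgebra.pow_antitone ha.1 ha.2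
  refine ⟨le_antisymm ?_ ?_, .of_nonneg ha.1⟩
  · simpa only [sq, pow_one] using hanti (show 1 ≤ 2 by norm_num)
  · simpa only [sq, h] using hanti (show 2 ≤ 3 by norm_num)

theorem le_floor_norm_add_one {a : A} (ha : IsSelfAdjoint a) : a ≤ (⌊‖a‖⌋₊ + 1 : ℕ) := by
  refine ha.le_algebraMap_norm_self.trans ?_
  simpa only [map_natCast] using
    algebraMap_mono A (show ‖a‖ ≤ (⌊‖a‖⌋₊ + 1 : ℕ) by exact_mod_cast (Nat.lt_floor_add_one _).le)

theorem exists_eq_nsmul_two_mul_sub_one {a : A} (ha : IsSelfAdjoint a) :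
    ∃ n : ℕ, ∃ e ∈ Set.Icc (0 : A) 1, a = n • (2 * e - 1) := by
  set n := ⌊‖a‖⌋₊ + 1
  have hle : a ≤ n := le_floor_norm_add_one ha
  have hge : -a ≤ n := by simpa only [norm_neg] using le_floor_norm_add_one ha.neg
  have hpos : 0 < 2 * n := by positivity
  refine ⟨n, ((2 * n : ℕ) : ℝ)⁻¹ • (a + n), inv_natCast_smul_mem_Icc_s7 ℝ hpos ⟨?_, ?_⟩, ?_⟩
  · exact neg_le_iff_add_nonneg'.1 hge
  · push_cast
    rw [two_mul]
    gcongr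
  · rw [nsmul_eq_mul, mul_sub, mul_one, ← mul_assoc, ← Nat.cast_two, ← Nat.cast_mul, mul_comm n,
      ← nsmul_eq_mul, nsmul_inv_natCast_smul hpos, add_sub_cancel_right]

end CStarAlgebra

section Kadison

variable {A B : Type*} [CStarAlgebra A] [PartialOrder A] [StarOrderedRing A]
  [CStarAlgebra B] [PartialOrder B] [StarOrderedRing B] {T : A →+o B}

theorem nsmul_sq_map_sub_map_sq_le (hT1 : T 1 ≤ 1) {e : A} (he : e ∈ Set.Icc (0 : A) 1)
    {n : ℕ} (hn : 0 < n) :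
    n • (T (2 * e - 1) ^ 2 - T ((2 * e - 1) ^ 2)) ≤ T (4 * (e * (1 - e))) := by
  set p : ℕ → A := fun k => Polynomial.aeval e (bernsteinPolynomial ℤ n k) with hp
  have htotal : ∑ k ∈ Finset.range (n + 1), T (p k) = T 1 := by
    rw [← map_sum, hp, ← map_sum, bernsteinPolynomial.sum, map_one]
  have hmean : ∑ k ∈ Finset.range (n + 1), (2 * k - n : ℤ) • T (p k) = n • T (2 * e - 1) := by
    simp_rw [← map_zsmul, hp, ← map_zsmul]
    rw [← map_sum, ← map_sum, sum_two_mul_sub_zsmul_bernstein, map_nsmul, map_nsmul]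
    simp only [map_sub, map_mul, map_ofNat, map_one, Polynomial.aeval_X]
  have hsq : ∑ k ∈ Finset.range (n + 1), (2 * k - n : ℤ) ^ 2 • T (p k) =
      n ^ 2 • T ((2 * e - 1) ^ 2) + n • T (4 * (e * (1 - e))) := by
    simp_rw [← map_zsmul, hp, ← map_zsmul]
    rw [← map_sum, ← map_sum, sum_two_mul_sub_sq_zsmul_bernstein, map_add, map_nsmul, map_nsmul,
      map_add, map_nsmul, map_nsmul]
    simp only [map_sub, map_mul, map_pow, map_ofNat, map_one, Polynomial.aeval_X]
  have hjensen := sq_sum_smul_le_sum_sq_smul (Finset.range (n + 1)) (fun k : ℕ => (2 * k - n : ℤ))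
    (fun k => T (p k)) (fun k _ => map_nonneg T (aeval_bernstein_nonneg he n k))
    (htotal.trans_le hT1)
  rw [hmean, hsq, smul_pow, ← sub_le_iff_le_add', ← nsmul_sub, sq n, mul_nsmul] at hjensen
  have hn' : (0 : ℝ) < n := by exact_mod_cast hn
  simpa only [← Nat.cast_smul_eq_nsmul ℝ, smul_le_smul_iff_of_pos_left hn'] using hjensen

theorem sq_map_le_map_sq (hT1 : T 1 ≤ 1) {a : A} (ha : IsSelfAdjoint a) :
    T a ^ 2 ≤ T (a ^ 2) := by
  obtain ⟨m, e, he, rfl⟩ := exists_eq_nsmul_two_mul_sub_one ha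
  have hunit : T (2 * e - 1) ^ 2 ≤ T ((2 * e - 1) ^ 2) :=
    sub_nonpos.1 <| nonpos_of_forall_nsmul_le fun _ hn => nsmul_sq_map_sub_map_sq_le hT1 he hn
  rw [map_nsmul, smul_pow, smul_pow, map_nsmul]
  exact nsmul_le_nsmul_right hunit _

end Kadison

section JordanMultiplicativeDomain

theorem nsmul_add_sq {R : Type*} [Ring R] (n : ℕ) (x y : R) :
    (n • x + y) ^ 2 = n ^ 2 • x ^ 2 + n • (x * y + y * x) + y ^ 2 := by
  simp only [sq, add_mul, mul_add, smul_mul_assoc, mul_smul_comm, smul_add, mul_smul]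
  abel

theorem two_nsmul_mul_mul_self {R : Type*} [Ring R] (x y : R) :
    2 • (x * y * x) = x * (x * y + y * x) + (x * y + y * x) * x - (x ^ 2 * y + y * x ^ 2) := by
  noncomm_ring

variable {A B : Type*} [CStarAlgebra A] [PartialOrder A] [StarOrderedRing A]
  [CStarAlgebra B] [PartialOrder B] [StarOrderedRing B] {T : A →+o B} {x b : A}

theorem map_mul_add_mul_le_of_map_sq (hT1 : T 1 ≤ 1) (hx : IsSelfAdjoint x)
    (hTx : T (x ^ 2) = T x ^ 2) (hb : IsSelfAdjoint b) :
    T x * T b + T b * T x ≤ T (x * b + b * x) := by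
  rw [← sub_nonpos]
  refine nonpos_of_forall_nsmul_le (c := T (b ^ 2) - T b ^ 2) fun n _ => ?_
  have hkadison := sq_map_le_map_sq hT1 (((IsSelfAdjoint.all n).smul hx).add hb)
  rw [map_add, map_nsmul, nsmul_add_sq, nsmul_add_sq, map_add, map_add, map_nsmul, map_nsmul, hTx,
    add_assoc, add_assoc, add_le_add_iff_left] at hkadison
  rwa [nsmul_sub, sub_le_sub_iff, add_comm (T (b ^ 2))]

theorem map_mul_add_mul_of_map_sq (hT1 : T 1 ≤ 1) (hx : IsSelfAdjoint x)
    (hTx : T (x ^ 2) = T x ^ 2) (hb : IsSelfAdjoint b) :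
    T (x * b + b * x) = T x * T b + T b * T x := by
  refine le_antisymm ?_ (map_mul_add_mul_le_of_map_sq hT1 hx hTx hb)
  have hneg := map_mul_add_mul_le_of_map_sq hT1 hx hTx hb.neg
  rwa [map_neg, mul_neg, neg_mul, ← neg_add, mul_neg, neg_mul, ← neg_add, map_neg,
    neg_le_neg_iff] at hneg

theorem map_pow_succ_of_map_sq (hT1 : T 1 ≤ 1) (hx : IsSelfAdjoint x)
    (hTx : T (x ^ 2) = T x ^ 2) (n : ℕ) : T (x ^ (n + 1)) = T x ^ (n + 1) := by
  induction n with
  | zero => simp only [zero_add, pow_one]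
  | succ n ih =>
    have hjordan := map_mul_add_mul_of_map_sq hT1 hx hTx (hx.pow (n + 1))
    rw [ih, ← pow_succ', ← pow_succ, ← pow_succ', ← pow_succ, map_add] at hjordan
    have : IsAddTorsionFree B := .of_isTorsionFree ℝ B
    exact nsmul_right_injective two_ne_zero (by simpa only [two_nsmul] using hjordan)

theorem map_conjugate_of_map_sq (hT1 : T 1 ≤ 1) (hx : IsSelfAdjoint x)
    (hTx : T (x ^ 2) = T x ^ 2) (hb : IsSelfAdjoint b) :
    T (x * b * x) = T x * T b * T x := by
  have hsum : IsSelfAdjoint (x * b + b * x) := by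
    simp only [IsSelfAdjoint, star_add, star_mul, hx.star_eq, hb.star_eq, add_comm]
  have hTx2 : T ((x ^ 2) ^ 2) = T (x ^ 2) ^ 2 := by
    rw [hTx, ← pow_mul, ← pow_mul, map_pow_succ_of_map_sq hT1 hx hTx]
  have htwice : 2 • T (x * b * x) = 2 • (T x * T b * T x) := by
    rw [← map_nsmul, two_nsmul_mul_mul_self, map_sub, map_mul_add_mul_of_map_sq hT1 hx hTx hsum,
      map_mul_add_mul_of_map_sq hT1 (hx.pow 2) hTx2 hb, map_mul_add_mul_of_map_sq hT1 hx hTx hb,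
      hTx, two_nsmul_mul_mul_self]
  have : IsAddTorsionFree B := .of_isTorsionFree ℝ B
  exact nsmul_right_injective two_ne_zero htwice

end JordanMultiplicativeDomain

section MapOne

variable {A : Type*} [CStarAlgebra A] [PartialOrder A] [StarOrderedRing A] {T : A →+o A}

theorem map_map_one_sq (hT1 : T 1 ≤ 1) (hidem : T (T 1) = T 1) : T (T 1 ^ 2) = T 1 := by
  have hpos : 0 ≤ T 1 := map_nonneg T zero_le_one
  have hle : T 1 ^ 2 ≤ T 1 := by
    simpa only [pow_one] using CStarAlgebra.pow_antitone hpos hT1 one_le_two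
  have hge : 2 • T 1 ≤ 1 + T 1 ^ 2 := by
    rw [← sub_nonneg]
    convert CStarAlgebra.pow_nonneg (sub_nonneg.2 hT1) 2 using 1
    noncomm_ring
  refine le_antisymm (by simpa only [hidem] using OrderHomClass.mono T hle) ?_
  have hmap := OrderHomClass.mono T hge
  rwa [map_nsmul, map_add, hidem, two_nsmul, add_le_add_iff_left] at hmap

theorem isStarProjection_map_one (hT1 : T 1 ≤ 1) (hidem : T (T 1) = T 1)
    (hcond : T (T 1 * 1 * T 1) = T 1 * T 1 * T 1) : IsStarProjection (T 1) := by
  refine isStarProjection_of_pow_three_eq ⟨map_nonneg T zero_le_one, hT1⟩ ?_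
  rw [pow_three', ← hcond, mul_one, ← sq, map_map_one_sq hT1 hidem]

end MapOne

section Extension

/-- A map defined on the effects `Set.Icc 0 1`, encoded as a map on all of `A`, that preserves
those sums of effects which are again effects. -/
def AdditiveOnEffects {A B : Type*} [Ring A] [PartialOrder A] [Add B] (τ : A → B) : Prop :=
  ∀ a ∈ Set.Icc (0 : A) 1, ∀ b ∈ Set.Icc (0 : A) 1,
    a + b ∈ Set.Icc (0 : A) 1 → τ (a + b) = τ a + τ b

/-- The homogeneous extension of `τ` from the effects to the positive cone: an element is scaled
down by an integer exceeding its norm. Only the values on positive elements are meaningful. -/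
noncomputable def coneExtension {A B : Type*} [CStarAlgebra A] [AddCommMonoid B] (τ : A → B)
    (a : A) : B :=
  (⌊‖a‖⌋₊ + 1) • τ (((⌊‖a‖⌋₊ + 1 : ℕ) : ℝ)⁻¹ • a)

namespace AdditiveOnEffects

theorem map_nsmul {A B : Type*} [Ring A] [PartialOrder A] [IsOrderedAddMonoid A] [ZeroLEOneClass A]
    [AddCommGroup B] {τ : A → B} (hτ : AdditiveOnEffects τ) {a : A} (ha : 0 ≤ a) (n : ℕ)
    (hn : n • a ≤ 1) : τ (n • a) = n • τ a := by
  induction n with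
  | zero =>
    have hzero : (0 : A) ∈ Set.Icc (0 : A) 1 := ⟨le_rfl, zero_le_one⟩
    simpa using hτ 0 hzero 0 hzero (by rwa [add_zero])
  | succ k ih =>
    rw [succ_nsmul] at hn ⊢
    have hka : 0 ≤ k • a := nsmul_nonneg ha k
    have hka1 : k • a ≤ 1 := (le_add_of_nonneg_right ha).trans hn
    have ha1 : a ≤ 1 := (le_add_of_nonneg_left hka).trans hn
    rw [hτ _ ⟨hka, hka1⟩ _ ⟨ha, ha1⟩ ⟨add_nonneg hka ha, hn⟩, ih hka1, succ_nsmul]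

variable {A B : Type*} [CStarAlgebra A] [PartialOrder A] [StarOrderedRing A] [AddCommGroup B]
  {τ : A → B}

theorem nsmul_map_inv_smul_mul (hτ : AdditiveOnEffects τ) {a : A} {m n : ℕ} (hm : 0 < m)
    (hn : 0 < n) (ha : a ∈ Set.Icc (0 : A) m) :
    (m * n) • τ (((m * n : ℕ) : ℝ)⁻¹ • a) = m • τ ((m : ℝ)⁻¹ • a) := by
  have hsplit : (m : ℝ)⁻¹ • a = n • (((m * n : ℕ) : ℝ)⁻¹ • a) := by
    rw [Nat.cast_mul, mul_inv_rev, mul_smul, nsmul_inv_natCast_smul hn]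
  have hle := (inv_natCast_smul_mem_Icc_s7 ℝ hm ha).2
  rw [hsplit] at hle ⊢
  rw [hτ.map_nsmul (smul_nonneg (by positivity) ha.1) n hle, mul_nsmul']

theorem coneExtension_eq (hτ : AdditiveOnEffects τ) {a : A} {n : ℕ} (hn : 0 < n)
    (ha : a ∈ Set.Icc (0 : A) n) : coneExtension τ a = n • τ ((n : ℝ)⁻¹ • a) := by
  have hnorm : a ∈ Set.Icc (0 : A) (⌊‖a‖⌋₊ + 1 : ℕ) :=
    ⟨ha.1, le_floor_norm_add_one (.of_nonneg ha.1)⟩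
  rw [coneExtension, ← hτ.nsmul_map_inv_smul_mul (Nat.succ_pos _) hn hnorm, mul_comm,
    hτ.nsmul_map_inv_smul_mul hn (Nat.succ_pos _) ha]

theorem coneExtension_eqOn (hτ : AdditiveOnEffects τ) :
    Set.EqOn (coneExtension τ) τ (Set.Icc (0 : A) 1) := fun a ha => by
  rw [hτ.coneExtension_eq one_pos (by rwa [Nat.cast_one]), Nat.cast_one, inv_one, one_smul,
    one_smul]

theorem coneExtension_add (hτ : AdditiveOnEffects τ) {a b : A} (ha : 0 ≤ a) (hb : 0 ≤ b) :
    coneExtension τ (a + b) = coneExtension τ a + coneExtension τ b := by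
  set n := ⌊‖a + b‖⌋₊ + 1
  have hn : 0 < n := Nat.succ_pos _
  have habn : a + b ≤ n := le_floor_norm_add_one (.of_nonneg (add_nonneg ha hb))
  have han : a ∈ Set.Icc (0 : A) n := ⟨ha, (le_add_of_nonneg_right hb).trans habn⟩
  have hbn : b ∈ Set.Icc (0 : A) n := ⟨hb, (le_add_of_nonneg_left ha).trans habn⟩
  have hab : a + b ∈ Set.Icc (0 : A) n := ⟨add_nonneg ha hb, habn⟩
  have hsum := inv_natCast_smul_mem_Icc_s7 ℝ hn hab
  rw [smul_add] at hsum
  rw [hτ.coneExtension_eq hn hab, hτ.coneExtension_eq hn han, hτ.coneExtension_eq hn hbn,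
    smul_add, hτ _ (inv_natCast_smul_mem_Icc_s7 ℝ hn han) _ (inv_natCast_smul_mem_Icc_s7 ℝ hn hbn) hsum,
    nsmul_add]

theorem coneExtension_zero (hτ : AdditiveOnEffects τ) : coneExtension τ (0 : A) = 0 := by
  simpa only [add_zero, left_eq_add] using hτ.coneExtension_add (le_refl (0 : A)) le_rfl

theorem coneExtension_sub_coneExtension_eq (hτ : AdditiveOnEffects τ) {a b c d : A} (ha : 0 ≤ a)
    (hb : 0 ≤ b) (hc : 0 ≤ c) (hd : 0 ≤ d) (h : a - b = c - d) :
    coneExtension τ a - coneExtension τ b = coneExtension τ c - coneExtension τ d := by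
  rw [sub_eq_sub_iff_add_eq_add] at h ⊢
  rw [← hτ.coneExtension_add ha hd, ← hτ.coneExtension_add hc hb, h]

/-- The additive extension of `τ` to the whole algebra: real parts are split into positive and
negative parts, and imaginary parts are discarded. -/
noncomputable def extension (hτ : AdditiveOnEffects τ) : A →+ B :=
  AddMonoidHom.mk'
    (fun x => coneExtension τ (ℜ x : A)⁺ - coneExtension τ (ℜ x : A)⁻) fun x y => by
      have hpos (z : A) : 0 ≤ (ℜ z : A)⁺ := CFC.posPart_nonneg _
      have hneg (z : A) : 0 ≤ (ℜ z : A)⁻ := CFC.negPart_nonneg _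
      have hparts (z : A) : (ℜ z : A)⁺ - (ℜ z : A)⁻ = ℜ z := CFC.posPart_sub_negPart _ (ℜ z).2
      rw [sub_add_sub_comm, ← hτ.coneExtension_add (hpos x) (hpos y),
        ← hτ.coneExtension_add (hneg x) (hneg y)]
      refine hτ.coneExtension_sub_coneExtension_eq (hpos _) (hneg _)
        (add_nonneg (hpos x) (hpos y)) (add_nonneg (hneg x) (hneg y)) ?_
      rw [add_sub_add_comm, hparts, hparts, hparts, map_add, AddSubgroup.coe_add]

theorem extension_of_nonneg (hτ : AdditiveOnEffects τ) {a : A} (ha : 0 ≤ a) :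
    hτ.extension a = coneExtension τ a := by
  have hsa : IsSelfAdjoint a := .of_nonneg ha
  change coneExtension τ (ℜ a : A)⁺ - coneExtension τ (ℜ a : A)⁻ = _
  rw [hsa.coe_realPart, (CFC.posPart_eq_self a).2 ha, (CFC.negPart_eq_zero_iff a hsa).2 ha,
    hτ.coneExtension_zero, sub_zero]

theorem extension_eqOn (hτ : AdditiveOnEffects τ) :
    Set.EqOn hτ.extension τ (Set.Icc (0 : A) 1) := fun _ ha =>
  (hτ.extension_of_nonneg ha.1).trans (hτ.coneExtension_eqOn ha)

theorem exists_orderAddMonoidHom_eqOn [PartialOrder B] [IsOrderedAddMonoid B]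
    (hτ : AdditiveOnEffects τ) (hpos : ∀ a ∈ Set.Icc (0 : A) 1, 0 ≤ τ a) :
    ∃ T : A →+o B, Set.EqOn T τ (Set.Icc (0 : A) 1) := by
  refine ⟨⟨hτ.extension, (monotone_iff_map_nonneg hτ.extension).2 fun a ha => ?_⟩,
    hτ.extension_eqOn⟩
  rw [hτ.extension_of_nonneg ha, coneExtension]
  exact nsmul_nonneg (hpos _ <| inv_natCast_smul_mem_Icc_s7 ℝ (Nat.succ_pos _)
    ⟨ha, le_floor_norm_add_one (.of_nonneg ha)⟩) _

end AdditiveOnEffects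

end Extension

theorem conditionalExpectation_iff_range_closed_under_square_general
    (A : Type*) [CStarAlgebra A] [PartialOrder A] [StarOrderedRing A]
    (τ : A → A)
    (hmaps : ∀ a ∈ Set.Icc (0 : A) 1, τ a ∈ Set.Icc (0 : A) 1)
    (hadd : ∀ a ∈ Set.Icc (0 : A) 1, ∀ b ∈ Set.Icc (0 : A) 1,
      a + b ∈ Set.Icc (0 : A) 1 → τ (a + b) = τ a + τ b)
    (hidem : ∀ a ∈ Set.Icc (0 : A) 1, τ (τ a) = τ a) :
    (∀ a ∈ Set.Icc (0 : A) 1, ∀ b ∈ Set.Icc (0 : A) 1,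
        τ (τ a * b * τ a) = τ a * τ b * τ a) ↔
    (∀ a ∈ Set.Icc (0 : A) 1, ∃ b ∈ Set.Icc (0 : A) 1, (τ a) ^ 2 = τ b) := by
  obtain ⟨T, hTτ⟩ := AdditiveOnEffects.exists_orderAddMonoidHom_eqOn hadd fun a ha => (hmaps a ha).1
  have hone : (1 : A) ∈ Set.Icc (0 : A) 1 := ⟨zero_le_one, le_rfl⟩
  have hT1 : T 1 ≤ 1 := hTτ hone ▸ (hmaps 1 hone).2
  have hfix (a : A) (ha : a ∈ Set.Icc (0 : A) 1) : T (τ a) = τ a :=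
    (hTτ (hmaps a ha)).trans (hidem a ha)
  have hconj {a b : A} (ha : a ∈ Set.Icc (0 : A) 1) (hb : b ∈ Set.Icc (0 : A) 1) :
      T (τ a * b * τ a) = τ (τ a * b * τ a) := hTτ (conjugate_mem_Icc (hmaps a ha) hb)
  refine ⟨fun hcond a ha => ⟨τ a * 1 * τ a, conjugate_mem_Icc (hmaps a ha) hone, ?_⟩,
    fun hsq a ha b hb => ?_⟩
  · have hproj : IsStarProjection (T 1) := by
      refine isStarProjection_map_one hT1 ?_ ?_ <;> rw [hTτ hone]
      exacts [hfix 1 hone, (hconj hone hone).trans (hcond 1 hone 1 hone)]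
    have hle : τ a ≤ T 1 := hTτ ha ▸ OrderHomClass.mono T ha.2
    rw [hcond a ha 1 hone, ← hTτ hone,
      (hproj.mul_right_and_mul_left_of_nonneg_of_le (hmaps a ha).1 hle).1, sq]
  · obtain ⟨c, hc, hac⟩ := hsq a ha
    have hTsq : T (τ a ^ 2) = T (τ a) ^ 2 := by rw [hac, hfix c hc, hfix a ha, hac]
    rw [← hconj ha hb, map_conjugate_of_map_sq hT1 (.of_nonneg (hmaps a ha).1) hTsq
      (.of_nonneg hb.1), hfix a ha, hTτ hb]

/-- A state operator `τ` on the effect algebra `E(A)` of a unital C*-algebra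
satisfies the conditional expectation property iff its range is closed under squaring. -/
theorem conditionalExpectation_iff_range_closed_under_square
    (A : Type*) [CStarAlgebra A] [PartialOrder A] [StarOrderedRing A]
    (τ : A → A)
    (hmaps : ∀ a ∈ Set.Icc (0 : A) 1, τ a ∈ Set.Icc (0 : A) 1)
    (hunital : τ 1 = 1)
    (hadd : ∀ a ∈ Set.Icc (0 : A) 1, ∀ b ∈ Set.Icc (0 : A) 1,
      a + b ∈ Set.Icc (0 : A) 1 → τ (a + b) = τ a + τ b)
    (hidem : ∀ a ∈ Set.Icc (0 : A) 1, τ (τ a) = τ a) :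
    (∀ a ∈ Set.Icc (0 : A) 1, ∀ b ∈ Set.Icc (0 : A) 1,
        τ (τ a * b * τ a) = τ a * τ b * τ a) ↔
    (∀ a ∈ Set.Icc (0 : A) 1, ∃ b ∈ Set.Icc (0 : A) 1, (τ a) ^ 2 = τ b) :=
  conditionalExpectation_iff_range_closed_under_square_general A τ hmaps hadd hidem
end

section
/- Let X be a nonempty compact Hausdorff space and let T : C(X,ℝ) → C(X,ℝ) be a linear map that is positive (0 ≤ f implies 0 ≤ T(f)), unital (T(1) = 1, where 1 is the constant function one), and idempotent (T(T(f)) = T(f) for all f). Then the following are equivalent: (a) T((T(f))²) = (T(f))² for every f ∈ C(X,ℝ); (b) T(T(f) ⊓ T(g)) = T(f) ⊓ T(g) for every f, g ∈ C(X,ℝ), where ⊓ denotes the pointwise minimum. -/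
/-!
Evaluating `T` at a point gives a positive unital functional `φ`, and the theorem compares two ways
of saying that `φ` is concentrated where `f` equals `φ f`: the variance `φ (f²) - (φ f)²`
vanishes, or the mean deviation `φ |f - φ f|` does. They agree by Cauchy–Schwarz, applied to
`|u|² ≤ u² · 1` and to `(u²)² ≤ |u| · |u|³` with `u = f - φ f`.

For a fixed point `f` of `T`, vanishing of the variance at every point of `X` says that `f²` is a
fixed point, and vanishing of the mean deviations says that every `|f - a|` is one. Closure under
`|·|` is the same as closure under `⊓`, because `2 (f ⊓ g) = f + g - |g - f|`.
-/

section PositiveFunctional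

variable {X : Type*} [TopologicalSpace X] (φ : C(X, ℝ) →ₚ[ℝ] ℝ)

theorem sq_map_le_map_mul_map {a b c : C(X, ℝ)} (ha : 0 ≤ a) (hb : 0 ≤ b) (h : c ^ 2 ≤ a * b) :
    φ c ^ 2 ≤ φ a * φ b := by
  have quadratic_nonneg (t : ℝ) : 0 ≤ (t * t) • a + (2 * t) • c + b := fun x => by
    have hax : 0 ≤ a x := ha x
    have hbx : 0 ≤ b x := hb x
    have hcx : c x ^ 2 ≤ a x * b x := h x
    have sum_nonneg : 0 ≤ t * t * a x + b x :=
      add_nonneg (mul_nonneg (mul_self_nonneg t) hax) hbx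
    have sq_cross_le : (2 * t * c x) ^ 2 ≤ (t * t * a x + b x) ^ 2 := calc
      (2 * t * c x) ^ 2 = 4 * t ^ 2 * c x ^ 2 := by ring
      _ ≤ 4 * t ^ 2 * (a x * b x) := by gcongr
      _ = 4 * (t * t * a x) * b x := by ring
      _ ≤ (t * t * a x + b x) ^ 2 := four_mul_le_sq_add _ _
    have neg_le_cross := (abs_le_of_sq_le_sq' sq_cross_le sum_nonneg).1
    simpa using show 0 ≤ t * t * a x + 2 * t * c x + b x by linarith
  have discrim_nonpos : discrim (φ a) (2 * φ c) (φ b) ≤ 0 := discrim_le_zero fun t => by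
    have map_quadratic_nonneg := map_nonneg φ (quadratic_nonneg t)
    simp only [map_add, map_smul, smul_eq_mul] at map_quadratic_nonneg
    linarith
  rw [discrim] at discrim_nonpos
  linarith

theorem map_sq_eq_zero_iff_map_abs_eq_zero (u : C(X, ℝ)) : φ (u ^ 2) = 0 ↔ φ |u| = 0 := by
  have abs_nonneg_u : 0 ≤ |u| := abs_nonneg u
  have sq_nonneg_u : 0 ≤ u ^ 2 := fun x => sq_nonneg (u x)
  constructor <;> intro h
  · have cauchy_schwarz : φ |u| ^ 2 ≤ φ (u ^ 2) * φ 1 :=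
      sq_map_le_map_mul_map φ sq_nonneg_u zero_le_one fun x => by simp
    rw [h, zero_mul] at cauchy_schwarz
    exact (sq_nonpos_iff _).mp cauchy_schwarz
  · have cauchy_schwarz : φ (u ^ 2) ^ 2 ≤ φ |u| * φ (|u| ^ 3) :=
      sq_map_le_map_mul_map φ abs_nonneg_u (fun x => pow_nonneg (abs_nonneg (u x)) 3) fun x => by
        simpa [← pow_succ', ← pow_mul] using (Even.pow_abs (by decide : Even 4) (u x)).ge
    rw [h, zero_mul] at cauchy_schwarz
    exact (sq_nonpos_iff _).mp cauchy_schwarz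

variable {φ}

theorem map_sub_map_smul_one_sq (hφ : φ 1 = 1) (f : C(X, ℝ)) :
    φ ((f - φ f • (1 : C(X, ℝ))) ^ 2) = φ (f ^ 2) - φ f ^ 2 := by
  have expand : (f - φ f • (1 : C(X, ℝ))) ^ 2
      = f ^ 2 - (2 * φ f) • f + (φ f ^ 2) • (1 : C(X, ℝ)) := by
    ext x
    simp only [ContinuousMap.pow_apply, ContinuousMap.sub_apply, ContinuousMap.add_apply,
      ContinuousMap.smul_apply, ContinuousMap.one_apply, smul_eq_mul, mul_one]
    ring
  rw [expand]
  simp only [map_add, map_sub, map_smul, hφ, smul_eq_mul]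
  ring

theorem map_abs_sub_eq_of_map_abs_sub_eq_zero (hφ : φ 1 = 1) {f : C(X, ℝ)} {b : ℝ}
    (h : φ |f - b • (1 : C(X, ℝ))| = 0) (a : ℝ) :
    φ |f - a • (1 : C(X, ℝ))| = |b - a| := by
  have upper : |f - a • (1 : C(X, ℝ))| ≤ |f - b • (1 : C(X, ℝ))| + |b - a| • (1 : C(X, ℝ)) :=
    fun x => by simpa using abs_sub_le (f x) b a
  have lower : |b - a| • (1 : C(X, ℝ)) ≤ |f - b • (1 : C(X, ℝ))| + |f - a • (1 : C(X, ℝ))| :=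
    fun x => by simpa [abs_sub_comm b] using abs_sub_le b (f x) a
  have map_upper := OrderHomClass.mono φ upper
  have map_lower := OrderHomClass.mono φ lower
  simp only [map_add, map_smul, hφ, smul_eq_mul, mul_one, h, zero_add] at map_upper map_lower
  exact le_antisymm map_upper map_lower

theorem functional_map_sq_eq_iff_map_abs_sub (hφ : φ 1 = 1) (f : C(X, ℝ)) :
    φ (f ^ 2) = φ f ^ 2 ↔ ∀ a : ℝ, φ |f - a • (1 : C(X, ℝ))| = |φ f - a| := by
  rw [← sub_eq_zero, ← map_sub_map_smul_one_sq hφ, map_sq_eq_zero_iff_map_abs_eq_zero]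
  constructor
  · exact map_abs_sub_eq_of_map_abs_sub_eq_zero hφ
  · intro h
    rw [h, sub_self, abs_zero]

end PositiveFunctional

theorem linearMap_map_sq_eq_iff_map_abs_sub {X Y : Type*} [TopologicalSpace X] [TopologicalSpace Y]
    {T : C(X, ℝ) →ₗ[ℝ] C(Y, ℝ)} (hpos : ∀ f : C(X, ℝ), 0 ≤ f → 0 ≤ T f) (hunital : T 1 = 1)
    (f : C(X, ℝ)) :
    T (f ^ 2) = T f ^ 2 ↔
      ∀ a : ℝ, T |f - a • (1 : C(X, ℝ))| = |T f - a • (1 : C(Y, ℝ))| := by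
  have pointwise (y : Y) : T (f ^ 2) y = T f y ^ 2 ↔
      ∀ a : ℝ, T |f - a • (1 : C(X, ℝ))| y = |T f y - a| :=
    functional_map_sq_eq_iff_map_abs_sub
      (φ := .mk₀ ((ContinuousMap.evalCLM ℝ y).toLinearMap ∘ₗ T) fun g hg => hpos g hg y)
      (DFunLike.congr_fun hunital y) f
  simp only [ContinuousMap.ext_iff]
  rw [forall_comm]
  exact forall_congr' fun y => by simpa using pointwise y

theorem map_inf_map_iff_map_abs_map {𝕜 E : Type*} [DivisionSemiring 𝕜] [NeZero (2 : 𝕜)]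
    [Lattice E] [AddCommGroup E] [IsOrderedAddMonoid E] [Module 𝕜 E]
    {T : E →ₗ[𝕜] E} (hidem : ∀ u, T (T u) = T u) :
    (∀ u v, T (T u ⊓ T v) = T u ⊓ T v) ↔ ∀ u, T |T u| = |T u| := by
  constructor
  · intro h u
    have abs_eq_neg_inf : |T u| = -(T u ⊓ T (-u)) := by
      rw [map_neg, neg_inf, neg_neg, sup_comm, abs]
    rw [abs_eq_neg_inf, map_neg, h]
  · intro h u v
    rw [inf_eq_half_smul_add_sub_abs_sub' 𝕜, ← map_sub, map_smul, map_sub, map_add, h, hidem, hidem]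

theorem conditionalExpectation_iff_strong_on_CX_general
    {X : Type*} [TopologicalSpace X]
    (T : C(X, ℝ) →ₗ[ℝ] C(X, ℝ))
    (hpos : ∀ f : C(X, ℝ), 0 ≤ f → 0 ≤ T f)
    (hunital : T 1 = 1)
    (hidem : ∀ f : C(X, ℝ), T (T f) = T f) :
    (∀ f : C(X, ℝ), T ((T f) ^ 2) = (T f) ^ 2) ↔
    (∀ f g : C(X, ℝ), T (T f ⊓ T g) = T f ⊓ T g) := by
  have sq_fixed_iff (f : C(X, ℝ)) : T (T f ^ 2) = T f ^ 2 ↔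
      ∀ a : ℝ, T |T f - a • (1 : C(X, ℝ))| = |T f - a • (1 : C(X, ℝ))| := by
    simpa only [hidem] using linearMap_map_sq_eq_iff_map_abs_sub hpos hunital (T f)
  rw [map_inf_map_iff_map_abs_map hidem]
  constructor
  · intro h f
    simpa using (sq_fixed_iff f).mp (h f) 0
  · intro h f
    refine (sq_fixed_iff f).mpr fun a => ?_
    simpa only [map_sub, map_smul, hunital] using h (f - a • 1)

/-- For a positive unital idempotent linear map `T` on `C(X,ℝ)`, `X` a nonempty
compact Hausdorff space, the following are equivalent: (a) `T ((T f)²) = (T f)²` for all `f`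
(the induced state operator on `C₁(X)` is a conditional expectation); (b)
`T (T f ⊓ T g) = T f ⊓ T g` for all `f, g` (the induced state operator is strong). -/
theorem conditionalExpectation_iff_strong_on_CX
    (X : Type*) [TopologicalSpace X] [CompactSpace X] [T2Space X] [Nonempty X]
    (T : C(X, ℝ) →ₗ[ℝ] C(X, ℝ))
    (hpos : ∀ f : C(X, ℝ), 0 ≤ f → 0 ≤ T f)
    (hunital : T 1 = 1)
    (hidem : ∀ f : C(X, ℝ), T (T f) = T f) :
    (∀ f : C(X, ℝ), T ((T f) ^ 2) = (T f) ^ 2) ↔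
    (∀ f g : C(X, ℝ), T (T f ⊓ T g) = T f ⊓ T g) :=
  conditionalExpectation_iff_strong_on_CX_general T hpos hunital hidem
end

section
/- Let X be a nonempty compact Hausdorff space and let T : C(X,ℝ) → C(X,ℝ) be a linear map that is positive (0 ≤ f implies 0 ≤ T(f)), unital (T(1) = 1) and idempotent (T(T(f)) = T(f) for all f). Then: (i) for every f ∈ C(X,ℝ) with 0 ≤ f, one has T(f) = 0 if and only if T(f²) = 0; (ii) the set I = {f ∈ C(X,ℝ) : T(f²) = 0} is an ideal of the ring C(X,ℝ) and is closed with respect to the supremum norm. -/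
/-!
For a positive functional `φ` on a commutative algebra, `(a, b) ↦ φ (a * b)` is a positive
semidefinite symmetric form, so by Cauchy-Schwarz its null vectors form its radical:
`φ (a ^ 2) = 0` if and only if `φ (a * b) = 0` for every `b`, a condition visibly closed under
multiplication. For `0 ≤ a`, applying the same principle to the functional `φ (a * ·)` and its null
vector `1` shows that `φ a = 0` forces `φ (a ^ 2) = 0`. A positive map `T` into `C(Y, ℝ)` is
handled through the positive functionals `f ↦ T f y`, which are norm continuous when the domain is
`C(X, ℝ)` with `X` compact.
-/

section Functional

variable {R A : Type*} [CommRing R] [LinearOrder R] [IsStrictOrderedRing R] [CommRing A]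
  [Algebra R A] {φ : A →ₗ[R] R} {a : A}

theorem map_mul_eq_zero_of_map_sq_eq_zero (hφ : ∀ b, 0 ≤ φ (b ^ 2)) (ha : φ (a ^ 2) = 0) (b : A) :
    φ (a * b) = 0 := by
  let B : A →ₗ[R] A →ₗ[R] R := (LinearMap.mul R A).compr₂ φ
  have hnonneg : ∀ b, 0 ≤ B b b := fun b => by simpa [B, sq] using hφ b
  have hsymm : B.IsSymm := ⟨fun b c => by simp [B, mul_comm]⟩
  have hnull : B a a = 0 := by simpa [B, sq] using ha
  have hker : B a = 0 :=
    (LinearMap.BilinForm.apply_apply_same_eq_zero_iff B hnonneg hsymm).mp hnull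
  exact LinearMap.congr_fun hker b

theorem map_mul_eq_zero_of_map_eq_zero (hφ : ∀ b, 0 ≤ φ (a * b ^ 2)) (ha : φ a = 0) (b : A) :
    φ (a * b) = 0 := by
  simpa using map_mul_eq_zero_of_map_sq_eq_zero (φ := φ ∘ₗ LinearMap.mulLeft R a) (a := 1) hφ
    (by simpa using ha) b

end Functional

/-- The largest ideal contained in the kernel of the linear map `T`, that is, the radical of the
form `(a, b) ↦ T (a * b)`. For positive `T` it provides the ideal structure on the null vectors of
this form. -/
def kernelIdeal {R A M : Type*} [CommSemiring R] [CommSemiring A] [Algebra R A] [AddCommMonoid M]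
    [Module R M] (T : A →ₗ[R] M) : Ideal A where
  carrier := {a | ∀ b, T (a * b) = 0}
  zero_mem' b := by rw [zero_mul, map_zero]
  add_mem' ha ha' b := by rw [add_mul, map_add, ha, ha', add_zero]
  smul_mem' c a ha b := by rw [smul_eq_mul, mul_comm c, mul_assoc, ha]

theorem coe_kernelIdeal_of_map_sq_nonneg {A Y : Type*} [CommRing A] [Algebra ℝ A]
    [TopologicalSpace Y] {T : A →ₗ[ℝ] C(Y, ℝ)} (hT : ∀ a, 0 ≤ T (a ^ 2)) :
    (kernelIdeal T : Set A) = {a | T (a ^ 2) = 0} := by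
  ext a
  refine ⟨fun ha => by simpa only [Set.mem_ofPred_eq, sq] using ha a, fun ha b => ?_⟩
  ext y
  exact map_mul_eq_zero_of_map_sq_eq_zero (φ := (ContinuousMap.evalCLM ℝ y).toLinearMap ∘ₗ T)
    (fun c => hT c y) (DFunLike.congr_fun ha y) b

section ContinuousFunctions

variable {X Y : Type*} [TopologicalSpace X] [TopologicalSpace Y]

theorem map_eq_zero_iff_map_sq_eq_zero {T : C(X, ℝ) →ₗ[ℝ] C(Y, ℝ)}
    (hT : ∀ f, 0 ≤ f → 0 ≤ T f) {f : C(X, ℝ)} (hf : 0 ≤ f) : T f = 0 ↔ T (f ^ 2) = 0 := by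
  constructor
  · intro hTf
    ext y
    rw [sq]
    exact map_mul_eq_zero_of_map_eq_zero (φ := (ContinuousMap.evalCLM ℝ y).toLinearMap ∘ₗ T)
      (fun g => hT _ (mul_nonneg hf (IsSelfAdjoint.all g).sq_nonneg) y) (DFunLike.congr_fun hTf y) f
  · intro hTf
    have hmem : f ∈ (kernelIdeal T : Set C(X, ℝ)) := by
      rwa [coe_kernelIdeal_of_map_sq_nonneg fun g => hT _ (IsSelfAdjoint.all g).sq_nonneg]
    simpa only [mul_one] using hmem 1

variable [CompactSpace X]

theorem continuous_of_map_nonneg {φ : C(X, ℝ) →ₗ[ℝ] ℝ} (hφ : ∀ f, 0 ≤ f → 0 ≤ φ f) :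
    Continuous φ := by
  refine AddMonoidHomClass.continuous_of_bound φ (φ 1) fun f => ?_
  have hsub : 0 ≤ φ (‖f‖ • 1 - f) := hφ _ fun x => by simpa using f.apply_le_norm x
  have hadd : 0 ≤ φ (‖f‖ • 1 + f) := hφ _ fun x => by
    simpa using neg_le_iff_add_nonneg'.mp (f.neg_norm_le_apply x)
  rw [map_sub, map_smul, smul_eq_mul] at hsub
  rw [map_add, map_smul, smul_eq_mul] at hadd
  rw [Real.norm_eq_abs, abs_le]
  constructor <;> linarith

theorem isClosed_map_sq_eq_zero {T : C(X, ℝ) →ₗ[ℝ] C(Y, ℝ)}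
    (hT : ∀ f, 0 ≤ f → 0 ≤ T f) : IsClosed {f | T (f ^ 2) = 0} := by
  have hcont (y : Y) : Continuous fun f => T f y :=
    continuous_of_map_nonneg (φ := (ContinuousMap.evalCLM ℝ y).toLinearMap ∘ₗ T)
      fun f hf => hT f hf y
  simp only [ContinuousMap.ext_iff, Set.ofPred_forall]
  exact isClosed_iInter fun y => isClosed_eq ((hcont y).comp (continuous_pow 2)) continuous_const

theorem kernel_ideal_of_stateOperator_on_CX_general (T : C(X, ℝ) →ₗ[ℝ] C(Y, ℝ))
    (hpos : ∀ f : C(X, ℝ), 0 ≤ f → 0 ≤ T f) :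
    (∀ f : C(X, ℝ), 0 ≤ f → (T f = 0 ↔ T (f ^ 2) = 0)) ∧
    (∃ I : Ideal C(X, ℝ), (I : Set C(X, ℝ)) = {f : C(X, ℝ) | T (f ^ 2) = 0}) ∧
    IsClosed {f : C(X, ℝ) | T (f ^ 2) = 0} :=
  ⟨fun _ hf => map_eq_zero_iff_map_sq_eq_zero hpos hf,
    ⟨kernelIdeal T, coe_kernelIdeal_of_map_sq_nonneg fun f =>
      hpos _ (IsSelfAdjoint.all f).sq_nonneg⟩,
    isClosed_map_sq_eq_zero hpos⟩

end ContinuousFunctions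

/-- For a positive unital idempotent linear map `T` on `C(X,ℝ)`, `X` a nonempty
compact Hausdorff space: (i) for `0 ≤ f`, `T f = 0 ↔ T (f²) = 0`; (ii) the set
`{f | T (f²) = 0}` is a (topologically closed) ring ideal of `C(X,ℝ)`. -/
theorem kernel_ideal_of_stateOperator_on_CX
    (X : Type*) [TopologicalSpace X] [CompactSpace X] [T2Space X] [Nonempty X]
    (T : C(X, ℝ) →ₗ[ℝ] C(X, ℝ))
    (hpos : ∀ f : C(X, ℝ), 0 ≤ f → 0 ≤ T f)
    (hunital : T 1 = 1)
    (hidem : ∀ f : C(X, ℝ), T (T f) = T f) :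
    (∀ f : C(X, ℝ), 0 ≤ f → (T f = 0 ↔ T (f ^ 2) = 0)) ∧
    (∃ I : Ideal C(X, ℝ), (I : Set C(X, ℝ)) = {f : C(X, ℝ) | T (f ^ 2) = 0}) ∧
    IsClosed {f : C(X, ℝ) | T (f ^ 2) = 0} := kernel_ideal_of_stateOperator_on_CX_general T hpos
end

section
/- Let X be a nonempty compact Hausdorff space and let T : C(X,ℝ) → C(X,ℝ) be a linear map that is positive (0 ≤ f implies 0 ≤ T(f)) and unital (T(1) = 1). Then the following are equivalent: (a) T(f²) = T((T(f))²) for every f ∈ C(X,ℝ) (i.e., T restricts to a Jordan state operator on C₁(X)); (b) there exist a nonempty closed subset K ⊆ X and a positive unital linear map Φ : C(K,ℝ) → C(X,ℝ) such that Φ(g) restricted to K equals g for every g ∈ C(K,ℝ), and T(f) = Φ(f restricted to K) for every f ∈ C(X,ℝ). -/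
/-!
The set `K` is the support of `T`, the common zero set of the nonnegative functions that `T`
annihilates. If `f ≤ 0` on `K`, then by compactness `f ≤ ε + g` on `X` for every `ε > 0` and some
`g ≥ 0` with `T g = 0`, so that `T f ≤ ε • T 1`; hence `T f` depends only, and monotonically, on
`f|_K`, and `T` factors through the restriction to `K`. The Jordan condition makes `T` idempotent
and then gives `T ((f - T f) ^ 2) = 0`, so `f` and `T f` agree on `K`.
-/

section JordanCondition

variable {𝕜 A : Type*} [DivisionRing 𝕜] [NeZero (2 : 𝕜)] [Ring A] [Module 𝕜 A] {T : A →ₗ[𝕜] A}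

theorem map_map_of_map_sq_eq (hunital : T 1 = 1) (hT : ∀ a, T (a ^ 2) = T (T a ^ 2)) (a : A) :
    T (T a) = T a := by
  have add_one_sq (b : A) : (b + 1) ^ 2 = b ^ 2 + (2 : 𝕜) • b + 1 := by
    rw [two_smul]
    noncomm_ring
  have h := hT (a + 1)
  rw [map_add, hunital, add_one_sq, add_one_sq] at h
  simp only [map_add, map_smul, hT a, add_left_inj, add_right_inj] at h
  exact (smul_right_injective A (two_ne_zero' 𝕜) h).symm

theorem map_sq_sub_map_eq_zero (hunital : T 1 = 1) (hT : ∀ a, T (a ^ 2) = T (T a ^ 2)) (a : A) :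
    T ((a - T a) ^ 2) = 0 := by
  rw [hT, map_sub, map_map_of_map_sq_eq hunital hT, sub_self, zero_pow two_ne_zero, map_zero]

end JordanCondition

section Support

variable {X E : Type*} [TopologicalSpace X] [AddCommGroup E] [Module ℝ E]

/-- The support of a linear map `T` on `C(X, ℝ)`, intended for positive `T`: the common zero set of
the nonnegative functions annihilated by `T`. When `X` is compact Hausdorff and `T` is integration
against a finite regular Borel measure, it is the topological support of that measure. -/
def mapSupport (T : C(X, ℝ) →ₗ[ℝ] E) : Set X :=
  {x | ∀ g : C(X, ℝ), 0 ≤ g → T g = 0 → g x = 0}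

theorem isClosed_mapSupport (T : C(X, ℝ) →ₗ[ℝ] E) : IsClosed (mapSupport T) := by
  simp only [mapSupport, Set.ofPred_forall]
  exact isClosed_iInter fun g => isClosed_iInter fun _ => isClosed_iInter fun _ =>
    isClosed_eq g.continuous continuous_const

theorem eq_of_map_sub_sq_eq_zero {T : C(X, ℝ) →ₗ[ℝ] E} {f g : C(X, ℝ)}
    (h : T ((f - g) ^ 2) = 0) {x : X} (hx : x ∈ mapSupport T) : f x = g x := by
  have hsq : (f x - g x) ^ 2 = 0 := hx ((f - g) ^ 2)
    (ContinuousMap.le_def.mpr fun y => sq_nonneg (f y - g y)) h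
  exact sub_eq_zero.mp (pow_eq_zero_iff two_ne_zero |>.mp hsq)

theorem exists_map_eq_zero_lt_add {T : C(X, ℝ) →ₗ[ℝ] E} {f : C(X, ℝ)}
    (hf : ∀ x ∈ mapSupport T, f x ≤ 0) {ε : ℝ} (hε : 0 < ε) (x : X) :
    ∃ g : C(X, ℝ), 0 ≤ g ∧ T g = 0 ∧ f x < ε + g x := by
  by_cases hx : x ∈ mapSupport T
  · exact ⟨0, le_rfl, map_zero T, by simpa using (hf x hx).trans_lt hε⟩
  · simp only [mapSupport, Set.mem_ofPred_eq, not_forall] at hx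
    obtain ⟨g, hg, hTg, hgx⟩ := hx
    refine ⟨(|f x| / g x) • g, smul_nonneg (div_nonneg (abs_nonneg _) (hg x)) hg,
      by rw [map_smul, hTg, smul_zero], ?_⟩
    rw [ContinuousMap.smul_apply, smul_eq_mul, div_mul_cancel₀ _ hgx]
    linarith [le_abs_self (f x)]

theorem exists_map_eq_zero_le_add [CompactSpace X] {T : C(X, ℝ) →ₗ[ℝ] E} {f : C(X, ℝ)}
    (hf : ∀ x ∈ mapSupport T, f x ≤ 0) {ε : ℝ} (hε : 0 < ε) :
    ∃ g : C(X, ℝ), T g = 0 ∧ f ≤ ε • 1 + g := by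
  choose g hg hTg hlt using exists_map_eq_zero_lt_add hf hε
  obtain ⟨t, ht⟩ := CompactSpace.elim_nhds_subcover (fun y => {z | f z < ε + g y z})
    fun y => (isOpen_lt f.continuous (by fun_prop)).mem_nhds (hlt y)
  refine ⟨∑ y ∈ t, g y, by simp only [map_sum, hTg, Finset.sum_const_zero], fun z => ?_⟩
  obtain ⟨y, hyt, hy⟩ : ∃ y ∈ t, f z < ε + g y z := by
    simpa using ht.ge (Set.mem_univ z)
  have hsum : g y z ≤ ∑ w ∈ t, g w z :=
    Finset.single_le_sum (f := fun w => g w z) (fun w _ => hg w z) hyt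
  simpa using hy.le.trans (by gcongr)

end Support

section PositiveMap

variable {X Y : Type*} [TopologicalSpace X] [CompactSpace X] [TopologicalSpace Y]
  {T : C(X, ℝ) →ₗ[ℝ] C(Y, ℝ)}

theorem map_nonpos_of_nonpos_on_mapSupport (hT : Monotone T) {f : C(X, ℝ)}
    (hf : ∀ x ∈ mapSupport T, f x ≤ 0) : T f ≤ 0 := by
  intro y
  have hsmul (ε : ℝ) (hε : 0 < ε) : T f y ≤ ε * T 1 y := by
    obtain ⟨g, hTg, hle⟩ := exists_map_eq_zero_le_add hf hε
    simpa [hTg] using hT hle y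
  have hlim : Filter.Tendsto (fun ε : ℝ => ε * T 1 y) (nhdsWithin 0 (Set.Ioi 0)) (nhds 0) :=
    tendsto_nhdsWithin_of_tendsto_nhds (Continuous.tendsto' (by fun_prop) _ _ (zero_mul _))
  exact ge_of_tendsto hlim (eventually_nhdsWithin_of_forall hsmul)

theorem map_le_map_of_le_on_mapSupport (hT : Monotone T) {f g : C(X, ℝ)}
    (h : ∀ x ∈ mapSupport T, f x ≤ g x) : T f ≤ T g := by
  rw [← sub_nonpos, ← map_sub]
  exact map_nonpos_of_nonpos_on_mapSupport hT fun x hx => sub_nonpos.mpr (h x hx)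

theorem map_eq_map_of_eqOn_mapSupport (hT : Monotone T) {f g : C(X, ℝ)}
    (h : Set.EqOn f g (mapSupport T)) : T f = T g :=
  le_antisymm (map_le_map_of_le_on_mapSupport hT fun _ hx => (h hx).le)
    (map_le_map_of_le_on_mapSupport hT fun _ hx => (h hx).ge)

theorem mapSupport_nonempty (hT : Monotone T) (hne : T ≠ 0) : (mapSupport T).Nonempty := by
  contrapose! hne
  ext1 f
  rw [LinearMap.zero_apply, ← map_zero T]
  exact map_eq_map_of_eqOn_mapSupport hT (hne ▸ Set.eqOn_empty f 0)

end PositiveMap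

section Factorization

variable {X : Type*} [TopologicalSpace X]

theorem exists_linearMap_eq_comp_restrict [NormalSpace X] {E : Type*} [AddCommGroup E] [Module ℝ E]
    {K : Set X} (hK : IsClosed K) {T : C(X, ℝ) →ₗ[ℝ] E}
    (hT : ∀ ⦃f g : C(X, ℝ)⦄, Set.EqOn f g K → T f = T g) :
    ∃ Φ : C(K, ℝ) →ₗ[ℝ] E, ∀ f, T f = Φ (f.restrict K) := by
  let restrictₗ : C(X, ℝ) →ₗ[ℝ] C(K, ℝ) :=
    (ContinuousMap.compRightAlgHom ℝ ℝ ⟨Subtype.val, continuous_subtype_val⟩).toLinearMap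
  obtain ⟨extend, hextend⟩ := restrictₗ.exists_rightInverse_of_surjective
    (LinearMap.range_eq_top.mpr fun g => g.exists_restrict_eq hK)
  refine ⟨T ∘ₗ extend, fun f => hT fun x hx => ?_⟩
  have h : restrictₗ (extend (f.restrict K)) = f.restrict K := LinearMap.congr_fun hextend _
  exact (DFunLike.congr_fun h ⟨x, hx⟩).symm

theorem map_sq_eq_of_extension_of_restriction {K : Set X} {T : C(X, ℝ) → C(X, ℝ)}
    {Φ : C(K, ℝ) → C(X, ℝ)} (hext : ∀ g, (Φ g).restrict K = g)
    (hT : ∀ f, T f = Φ (f.restrict K)) (f : C(X, ℝ)) : T (f ^ 2) = T (T f ^ 2) := by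
  have restrict_sq (g : C(X, ℝ)) : (g ^ 2).restrict K = g.restrict K ^ 2 := rfl
  rw [hT (f ^ 2), hT (T f ^ 2), restrict_sq, restrict_sq, hT f, hext]

end Factorization

theorem jordan_stateOperator_iff_extension_of_restriction_general
    (X : Type*) [TopologicalSpace X] [CompactSpace X] [NormalSpace X] [Nonempty X]
    (T : C(X, ℝ) →ₗ[ℝ] C(X, ℝ))
    (hpos : ∀ f : C(X, ℝ), 0 ≤ f → 0 ≤ T f)
    (hunital : T 1 = 1) :
    (∀ f : C(X, ℝ), T (f ^ 2) = T ((T f) ^ 2)) ↔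
    (∃ (K : Set X), K.Nonempty ∧ IsClosed K ∧
      ∃ Φ : C(K, ℝ) →ₗ[ℝ] C(X, ℝ),
        (∀ g : C(K, ℝ), 0 ≤ g → 0 ≤ Φ g) ∧
        Φ 1 = 1 ∧
        (∀ g : C(K, ℝ), (Φ g).restrict K = g) ∧
        (∀ f : C(X, ℝ), T f = Φ (f.restrict K))) := by
  refine ⟨fun hJ => ?_, fun ⟨K, _, _, Φ, _, _, hext, hT⟩ =>
    map_sq_eq_of_extension_of_restriction hext hT⟩
  have hmono : Monotone T := (monotone_iff_map_nonneg T).mpr hpos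
  have hne : T ≠ 0 := by
    rintro rfl
    exact zero_ne_one hunital
  have hK := isClosed_mapSupport T
  obtain ⟨Φ, hΦ⟩ :=
    exists_linearMap_eq_comp_restrict hK fun _ _ => map_eq_map_of_eqOn_mapSupport hmono
  refine ⟨mapSupport T, mapSupport_nonempty hmono hne, hK, Φ, fun g hg => ?_,
    (hΦ 1).symm.trans hunital, fun g => ?_, hΦ⟩
  · obtain ⟨f, rfl⟩ := g.exists_restrict_eq hK
    rw [← hΦ, ← map_zero T]
    exact map_le_map_of_le_on_mapSupport hmono fun x hx => hg ⟨x, hx⟩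
  · obtain ⟨f, rfl⟩ := g.exists_restrict_eq hK
    rw [← hΦ]
    ext x
    exact (eq_of_map_sub_sq_eq_zero (map_sq_sub_map_eq_zero hunital hJ f) x.2).symm

/-- A positive unital linear map `T` on `C(X,ℝ)`, `X` a nonempty compact
Hausdorff space, satisfies the Jordan condition `T (f²) = T ((T f)²)` for all `f` iff there
are a nonempty closed set `K ⊆ X` and a positive unital linear extension map
`Φ : C(K,ℝ) → C(X,ℝ)` (i.e. `Φ g` restricted to `K` equals `g`) with `T f = Φ (f|_K)`. -/
theorem jordan_stateOperator_iff_extension_of_restriction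
    (X : Type*) [TopologicalSpace X] [CompactSpace X] [T2Space X] [Nonempty X]
    (T : C(X, ℝ) →ₗ[ℝ] C(X, ℝ))
    (hpos : ∀ f : C(X, ℝ), 0 ≤ f → 0 ≤ T f)
    (hunital : T 1 = 1) :
    (∀ f : C(X, ℝ), T (f ^ 2) = T ((T f) ^ 2)) ↔
    (∃ (K : Set X), K.Nonempty ∧ IsClosed K ∧
      ∃ Φ : C(K, ℝ) →ₗ[ℝ] C(X, ℝ),
        (∀ g : C(K, ℝ), 0 ≤ g → 0 ≤ Φ g) ∧
        Φ 1 = 1 ∧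
        (∀ g : C(K, ℝ), (Φ g).restrict K = g) ∧
        (∀ f : C(X, ℝ), T f = Φ (f.restrict K))) :=
  jordan_stateOperator_iff_extension_of_restriction_general X T hpos hunital
end

section
/- Let X be a nonempty set and let N be a set of functions f : X → ℝ such that every f ∈ N satisfies 0 ≤ f(x) ≤ 1 for all x ∈ X, and: (1) every constant function with value c ∈ [0,1] belongs to N; (2) if f ∈ N then 1 − f ∈ N; (3) if f, g ∈ N then the function x ↦ min(f(x)+g(x), 1) belongs to N; (4) if f, g ∈ N then the pointwise minimum and the pointwise maximum of f and g belong to N; (5) if f ∈ N and c ∈ [0,1] then c·f ∈ N; (6) if (fₙ) is a sequence in N increasing pointwise to a function f, then f ∈ N. Let 𝔅 = {A ⊆ X : the indicator function of A belongs to N}. Then 𝔅 is a σ-algebra of subsets of X, and N is exactly the set of all 𝔅-measurable functions f : X → ℝ with 0 ≤ f ≤ 1. -/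
/-!
Truncated subtraction `f ⊖ g = 1 - min ((1 - f) + g) 1` and binary maxima `f ⊕ (g ⊖ f)` stay
inside a tribe, so a tribe is closed under countable suprema. If `f` is in the tribe, then `{a < f}`
is the support of `f ⊖ a`, and its indicator is the supremum of the `n`-fold truncated sums of
`f ⊖ a`. Conversely, `f` is the supremum of the functions `c · 1_{c < f}` with `c` in a countable
dense subset of `[0, 1]`, and `c · 1_A = c ⊖ 1_{Aᶜ}`.
-/

section

open Set Filter Topology MeasureTheory unitInterval

variable {X : Type*}

section Suprema

variable {ι : Type*}

theorem isLUB_range_indicator_iUnion {M : Type*} [Preorder M] [Zero M] [Nonempty ι]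
    (A : ι → Set X) {f : X → M} (hf : ∀ x, 0 ≤ f x) :
    IsLUB (range fun i => (A i).indicator f) ((⋃ i, A i).indicator f) := by
  refine ⟨?_, fun b hb => ?_⟩
  · rintro _ ⟨i, rfl⟩
    exact indicator_le_indicator_of_subset (subset_iUnion A i) hf
  · refine indicator_le' (fun x hx => ?_) fun x _ => ?_
    · obtain ⟨i, hi⟩ := mem_iUnion.1 hx
      simpa only [indicator_of_mem hi] using hb ⟨i, rfl⟩ x
    · exact (indicator_nonneg (fun y _ => hf y) x).trans (hb ⟨Classical.arbitrary ι, rfl⟩ x)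

theorem isLUB_range_min_natCast_mul {𝕜 : Type*} [Field 𝕜] [LinearOrder 𝕜]
    [IsStrictOrderedRing 𝕜] [Archimedean 𝕜] {f : X → 𝕜} (hf : ∀ x, 0 ≤ f x) :
    IsLUB (range fun (n : ℕ) x => min (n * f x) 1) ((Function.support f).indicator fun _ => 1) := by
  refine ⟨?_, fun b hb => ?_⟩
  · rintro _ ⟨n, rfl⟩ x
    by_cases hx : f x = 0 <;> simp [hx]
  · refine indicator_le' (fun x hx => ?_) fun x _ => ?_
    · have hpos : 0 < f x := (hf x).lt_of_ne' hx
      obtain ⟨n, hn⟩ := exists_nat_ge (1 / f x)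
      have hone : 1 ≤ n * f x := (div_le_iff₀ hpos).1 hn
      simpa only [min_eq_right hone] using hb ⟨n, rfl⟩ x
    · simpa using hb ⟨0, rfl⟩ x

theorem isLUB_range_indicator_lt {f : X → ℝ} (hf : ∀ x, f x ∈ I) {u : ι → I} (hu : DenseRange u) :
    IsLUB (range fun i => {x | (u i : ℝ) < f x}.indicator fun _ => (u i : ℝ)) f := by
  refine ⟨?_, fun b hb x => ?_⟩
  · rintro _ ⟨i, rfl⟩
    exact indicator_le' (fun x hx => le_of_lt hx) fun x _ => (hf x).1
  · by_contra! hlt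
    obtain ⟨j⟩ := hu.nonempty
    have hb0 : 0 ≤ b x := (indicator_nonneg (fun _ _ => (u j).2.1) x).trans (hb ⟨j, rfl⟩ x)
    have hbI : b x ∈ I := ⟨hb0, hlt.le.trans (hf x).2⟩
    obtain ⟨_, ⟨i, rfl⟩, hbi, hif⟩ :=
      hu.exists_between (show (⟨b x, hbI⟩ : I) < ⟨f x, hf x⟩ from hlt)
    have hle : (u i : ℝ) ≤ b x := by
      simpa only [indicator_of_mem (show x ∈ {y | (u i : ℝ) < f y} from hif)] using hb ⟨i, rfl⟩ x
    exact hle.not_gt hbi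

end Suprema

/-- A tribe over `X`: a family of `[0, 1]`-valued functions that contains zero and is closed under
complements, truncated sums and limits of increasing sequences. Convergence in the product topology
on `X → ℝ` is pointwise convergence. -/
structure IsTribe (T : Set (X → ℝ)) : Prop where
  mem_unitInterval : ∀ f ∈ T, ∀ x, f x ∈ I
  zero_mem : (fun _ => 0) ∈ T
  one_sub_mem : ∀ f ∈ T, (fun x => 1 - f x) ∈ T
  min_add_one_mem : ∀ f ∈ T, ∀ g ∈ T, (fun x => min (f x + g x) 1) ∈ T
  mem_of_tendsto : ∀ (F : ℕ → X → ℝ) (f : X → ℝ), (∀ n, F n ∈ T) → Monotone F →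
    Tendsto F atTop (𝓝 f) → f ∈ T

namespace IsTribe

variable {T : Set (X → ℝ)} {f g : X → ℝ} {A : Set X}

theorem max_sub_zero_mem (hT : IsTribe T) (hf : f ∈ T) (hg : g ∈ T) :
    (fun x => max (f x - g x) 0) ∈ T := by
  convert hT.one_sub_mem _ (hT.min_add_one_mem _ (hT.one_sub_mem f hf) g hg) using 2 with x
  rw [← max_sub_sub_left]
  ring_nf

theorem supClosed (hT : IsTribe T) : SupClosed T := by
  intro f hf g hg
  convert hT.min_add_one_mem f hf _ (hT.max_sub_zero_mem hg hf) using 1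
  ext x
  have hle : max (f x) (g x) ≤ 1 :=
    max_le (hT.mem_unitInterval f hf x).2 (hT.mem_unitInterval g hg x).2
  rw [← max_add_add_left, add_sub_cancel, add_zero, max_comm (g x), min_eq_left hle, Pi.sup_apply]

theorem mem_of_isLUB_range (hT : IsTribe T) {F : ℕ → X → ℝ} (hF : ∀ n, F n ∈ T)
    (hf : IsLUB (range F) f) : f ∈ T := by
  have hsup : IsLUB (range (partialSups F)) f := by
    rwa [IsLUB, upperBounds_range_partialSups]
  refine hT.mem_of_tendsto (partialSups F) f (fun n => ?_) (partialSups F).monotone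
    (tendsto_atTop_isLUB (partialSups F).monotone hsup)
  rw [partialSups_apply]
  exact hT.supClosed.finsetSup'_mem _ fun k _ => hF k

theorem min_natCast_mul_mem (hT : IsTribe T) (hf : f ∈ T) (n : ℕ) :
    (fun x => min (n * f x) 1) ∈ T := by
  induction n with
  | zero => simpa using hT.zero_mem
  | succ n ih =>
    convert hT.min_add_one_mem _ ih f hf using 2 with x
    have hfx : 0 ≤ f x := (hT.mem_unitInterval f hf x).1
    rw [← min_add_add_right, min_assoc, min_eq_right (le_add_of_nonneg_right hfx)]
    push_cast
    rw [add_one_mul]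

theorem indicator_support_mem (hT : IsTribe T) (hf : f ∈ T) :
    (Function.support f).indicator (fun _ => 1) ∈ T :=
  hT.mem_of_isLUB_range (hT.min_natCast_mul_mem hf)
    (isLUB_range_min_natCast_mul fun x => (hT.mem_unitInterval f hf x).1)

theorem indicator_compl_mem (hT : IsTribe T) (hA : A.indicator (fun _ => 1) ∈ T) :
    Aᶜ.indicator (fun _ => 1) ∈ T := by
  convert hT.one_sub_mem _ hA using 2 with x
  by_cases hx : x ∈ A <;> simp [hx]

theorem indicator_mem (hT : IsTribe T) (hA : A.indicator (fun _ => 1) ∈ T) (hf : f ∈ T) :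
    A.indicator f ∈ T := by
  convert hT.max_sub_zero_mem hf (hT.indicator_compl_mem hA) using 2 with x
  have hfx := hT.mem_unitInterval f hf x
  by_cases hx : x ∈ A
  · simp [hx, hfx.1]
  · simp [hx, hfx.2]

/-- The σ-algebra `𝔅` of a tribe: the sets whose indicator belongs to the tribe. -/
abbrev measurableSpace (hT : IsTribe T) : MeasurableSpace X where
  MeasurableSet' A := A.indicator (fun _ => (1 : ℝ)) ∈ T
  measurableSet_empty := by simpa only [indicator_empty] using hT.zero_mem
  measurableSet_compl _ := hT.indicator_compl_mem
  measurableSet_iUnion A hA :=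
    hT.mem_of_isLUB_range hA (isLUB_range_indicator_iUnion A fun _ => zero_le_one)

theorem measurable_of_mem (hT : IsTribe T) (hconst : ∀ c ∈ I, (fun _ => c) ∈ T) (hf : f ∈ T) :
    Measurable[hT.measurableSpace] f := by
  let _ := hT.measurableSpace
  have hfI := hT.mem_unitInterval f hf
  refine measurable_of_Ioi fun a => ?_
  rcases lt_or_ge a 0 with ha0 | ha0
  · convert MeasurableSet.univ
    exact eq_univ_of_forall fun x => ha0.trans_le (hfI x).1
  rcases lt_or_ge 1 a with ha1 | ha1
  · convert MeasurableSet.empty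
    exact eq_empty_of_forall_notMem fun x hx => (ha1.trans hx).not_ge (hfI x).2
  have hsupport : f ⁻¹' Ioi a = Function.support fun x => max (f x - a) 0 := by
    ext x
    simp
  rw [hsupport]
  exact hT.indicator_support_mem (hT.max_sub_zero_mem hf (hconst a ⟨ha0, ha1⟩))

theorem mem_of_measurable (hT : IsTribe T) (hconst : ∀ c ∈ I, (fun _ => c) ∈ T)
    (hf : Measurable[hT.measurableSpace] f) (hfI : ∀ x, f x ∈ I) : f ∈ T := by
  refine hT.mem_of_isLUB_range (fun n => ?_)
    (isLUB_range_indicator_lt hfI (TopologicalSpace.denseRange_denseSeq I))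
  exact hT.indicator_mem (hf measurableSet_Ioi) (hconst _ (Subtype.prop _))

end IsTribe

end

/-- If `N` is a set of `[0,1]`-valued functions on `X` containing the constants
and closed under complement, truncated addition, pointwise min and max, multiplication by
constants in `[0,1]`, and pointwise limits of increasing sequences, then the collection
`𝔅 = {A | indicator of A ∈ N}` is a σ-algebra and `N` consists exactly of the
`𝔅`-measurable functions with values in `[0,1]`. -/
theorem convex_subtribe_is_measurable_functions
    (X : Type*) [Nonempty X]
    (N : Set (X → ℝ))
    (hrange : ∀ f ∈ N, ∀ x : X, 0 ≤ f x ∧ f x ≤ 1)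
    (hconst : ∀ c : ℝ, 0 ≤ c → c ≤ 1 → (fun _ : X => c) ∈ N)
    (hcompl : ∀ f ∈ N, (fun x : X => 1 - f x) ∈ N)
    (htruncadd : ∀ f ∈ N, ∀ g ∈ N, (fun x : X => min (f x + g x) 1) ∈ N)
    (hmin : ∀ f ∈ N, ∀ g ∈ N, (fun x : X => min (f x) (g x)) ∈ N)
    (hmax : ∀ f ∈ N, ∀ g ∈ N, (fun x : X => max (f x) (g x)) ∈ N)
    (hsmul : ∀ f ∈ N, ∀ c : ℝ, 0 ≤ c → c ≤ 1 → (fun x : X => c * f x) ∈ N)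
    (hlim : ∀ (F : ℕ → X → ℝ) (f : X → ℝ), (∀ n, F n ∈ N) →
      (∀ x : X, Monotone fun n => F n x) →
      (∀ x : X, Filter.Tendsto (fun n => F n x) Filter.atTop (nhds (f x))) →
      f ∈ N) :
    ∃ m : MeasurableSpace X,
      (∀ A : Set X, m.MeasurableSet' A ↔ A.indicator (fun _ => (1 : ℝ)) ∈ N) ∧
      (∀ f : X → ℝ, f ∈ N ↔ (@Measurable X ℝ m Real.measurableSpace f ∧ ∀ x : X, 0 ≤ f x ∧ f x ≤ 1)) := by
  have hT : IsTribe N :=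
    { mem_unitInterval := hrange
      zero_mem := hconst 0 le_rfl zero_le_one
      one_sub_mem := hcompl
      min_add_one_mem := htruncadd
      mem_of_tendsto := fun F f hF hmono htendsto =>
        hlim F f hF (fun x _ _ h => hmono h x) (tendsto_pi_nhds.1 htendsto) }
  have hconstI : ∀ c ∈ unitInterval, (fun _ => c) ∈ N := fun c hc => hconst c hc.1 hc.2
  exact ⟨hT.measurableSpace, fun _ => Iff.rfl, fun f =>
    ⟨fun hf => ⟨hT.measurable_of_mem hconstI hf, hrange f hf⟩,
      fun hf => hT.mem_of_measurable hconstI hf.1 hf.2⟩⟩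
end
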